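/- Let (V,E,Ψ) be a strongly connected planar box-like self-affine GIFS with positive weights (p_e) and graph-directed measure family (μ_v)_{v∈V}, and fix q≥0. (a) For every s>γ(q) there is a constant C=C(s,q) such that ∑_{w∈E^*_δ} φ^{s,q}(w) ≤ C for all δ>0. (b) For every s<γ(q) there is a constant c=c(s,q)>0 such that ∑_{w∈E^*_δ} φ^{s,q}(w) ≥ c for all sufficiently small δ>0. -/

import Mathlib

open MeasureTheory Filter Set
open scoped Classical

noncomputable section

namespace LqGIFS

/-! ### Mesh cubes, moment sums, L^q spectra, box dimension -/

/-- Closed cube of the `δ`-mesh of `ℝ`. -/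
def meshCube1 (δ : ℝ) (k : ℤ) : Set ℝ := Set.Icc ((k : ℝ) * δ) (((k : ℝ) + 1) * δ)

/-- Closed cube of the `δ`-mesh of `ℝ²`. -/
def meshCube2 (δ : ℝ) (k : ℤ × ℤ) : Set (ℝ × ℝ) :=
  (Set.Icc ((k.1 : ℝ) * δ) (((k.1 : ℝ) + 1) * δ)) ×ˢ
    (Set.Icc ((k.2 : ℝ) * δ) (((k.2 : ℝ) + 1) * δ))

/-- The moment sum `D_δ^q(ν)` for a measure on `ℝ` (cubes of zero measure are omitted,
so that at `q = 0` this counts the mesh cubes of positive measure). -/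
def Dq1 (ν : Measure ℝ) (δ q : ℝ) : ℝ :=
  ∑' k : ℤ, if ν (meshCube1 δ k) = 0 then 0 else (ν (meshCube1 δ k)).toReal ^ q

/-- The moment sum `D_δ^q(ν)` for a measure on `ℝ²`. -/
def Dq2 (ν : Measure (ℝ × ℝ)) (δ q : ℝ) : ℝ :=
  ∑' k : ℤ × ℤ, if ν (meshCube2 δ k) = 0 then 0 else (ν (meshCube2 δ k)).toReal ^ q

/-- The `L^q`-spectrum of a measure on `ℝ` exists and equals `s` (i.e. upper and lower
`L^q`-spectra coincide and equal `s`). -/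
def HasLq1 (ν : Measure ℝ) (q s : ℝ) : Prop :=
  Tendsto (fun δ : ℝ => Real.log (Dq1 ν δ q) / (-Real.log δ))
    (nhdsWithin 0 (Set.Ioi 0)) (nhds s)

/-- The `L^q`-spectrum of a measure on `ℝ²` exists and equals `s`. -/
def HasLq2 (ν : Measure (ℝ × ℝ)) (q s : ℝ) : Prop :=
  Tendsto (fun δ : ℝ => Real.log (Dq2 ν δ q) / (-Real.log δ))
    (nhdsWithin 0 (Set.Ioi 0)) (nhds s)

/-- Number of closed `δ`-mesh cubes of `ℝ²` meeting `X`. -/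
def boxCount (X : Set (ℝ × ℝ)) (δ : ℝ) : ℕ :=
  Set.ncard {k : ℤ × ℤ | (X ∩ meshCube2 δ k).Nonempty}

/-- The box dimension of `X` exists and equals `d`. -/
def HasBoxDim (X : Set (ℝ × ℝ)) (d : ℝ) : Prop :=
  Tendsto (fun δ : ℝ => Real.log (boxCount X δ) / (-Real.log δ))
    (nhdsWithin 0 (Set.Ioi 0)) (nhds d)

/-! ### Matrices: 1-norm, spectral radius, permutation matrices -/

/-- The 1-norm `‖A‖ = ∑_{i,j} |a_{ij}|` of a square matrix. -/
def mnorm {ι : Type*} [Fintype ι] (A : Matrix ι ι ℝ) : ℝ := ∑ i, ∑ j, |A i j|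

/-- The spectral radius of a square real matrix, via the Gelfand formula. -/
def specRad {ι : Type*} [Fintype ι] [DecidableEq ι] (A : Matrix ι ι ℝ) : ℝ :=
  Filter.limsup (fun k : ℕ => (mnorm (A ^ k)) ^ ((k : ℝ)⁻¹)) Filter.atTop

/-- A square 0-1 matrix with exactly one 1 in each row and each column. -/
def IsPermMatrix {ι : Type*} (Z : Matrix ι ι ℝ) : Prop :=
  (∀ i j, Z i j = 0 ∨ Z i j = 1) ∧ (∀ i, ∃! j, Z i j = 1) ∧ (∀ j, ∃! i, Z i j = 1)

/-! ### Directed graphs -/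

/-- Strong connectivity of the finite directed graph with edge set `E`,
initial vertex map `ini` and terminal vertex map `ter`. -/
def GraphSC {V E : Type*} (ini ter : E → V) : Prop :=
  ∀ v v' : V, Relation.TransGen (fun u u' : V => ∃ e, ini e = u ∧ ter e = u') v v'

/-- The matrix `F^{(q)}_{x,y}` with entry `p_{e'}^q a_{e'}^x b_{e'}^y` at `(e,e')` when
`t(e) = i(e')`, and `0` otherwise. -/
def FmatG {V E : Type*} (ini ter : E → V) (p a b : E → ℝ) (q x y : ℝ) :
    Matrix E E ℝ :=
  fun e e' => if ter e = ini e' then p e' ^ q * a e' ^ x * b e' ^ y else 0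

/-- `f` is the entrywise product of the normalized left and right Perron vectors of the
irreducible matrix `F^{(q)}_{x,y(x)}` (spectral radius 1). -/
def IsPerronData {V E : Type*} [Fintype E] [DecidableEq E] (ini ter : E → V)
    (p a b : E → ℝ) (q x yx : ℝ) (f : E → ℝ) : Prop :=
  specRad (FmatG ini ter p a b q x yx) = 1 ∧
  ∃ u v : E → ℝ, (∀ e, 0 < u e) ∧ (∀ e, 0 < v e) ∧ (∑ e, u e) = 1 ∧
    (FmatG ini ter p a b q x yx).mulVec u = u ∧
    (FmatG ini ter p a b q x yx).vecMul v = v ∧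
    (∑ e, v e * u e) = 1 ∧ (∀ e, f e = v e * u e)

/-! ### Planar box-like graph-directed self-affine systems -/

/-- A planar box-like self-affine GIFS: a finite directed graph together with, for each
edge `e`, a contraction `ψ_e(z) = T_e z + t_e` whose linear part is the diagonal matrix
`diag(±a_e, ±b_e)` (when `diag e = true`) or the anti-diagonal matrix with entries
`±a_e` (top right) and `±b_e` (bottom left) (when `diag e = false`), `0 < a_e, b_e < 1`. -/
structure BoxLikeGIFS (V E : Type*) where
  init : E → V
  term : E → V
  a : E → ℝ
  b : E → ℝ
  sa : E → ℝ
  sb : E → ℝ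
  diag : E → Bool
  trans : E → ℝ × ℝ
  a_mem : ∀ e, a e ∈ Set.Ioo (0 : ℝ) 1
  b_mem : ∀ e, b e ∈ Set.Ioo (0 : ℝ) 1
  sa_mem : ∀ e, sa e = 1 ∨ sa e = -1
  sb_mem : ∀ e, sb e = 1 ∨ sb e = -1
  edge_exists : ∀ v, ∃ e, init e = v

namespace BoxLikeGIFS

variable {V E : Type*}

/-- The contraction `ψ_e`. -/
def map (S : BoxLikeGIFS V E) (e : E) : ℝ × ℝ → ℝ × ℝ := fun z =>
  if S.diag e then
    (S.sa e * S.a e * z.1 + (S.trans e).1, S.sb e * S.b e * z.2 + (S.trans e).2)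
  else
    (S.sa e * S.a e * z.2 + (S.trans e).1, S.sb e * S.b e * z.1 + (S.trans e).2)

def StronglyConnected (S : BoxLikeGIFS V E) : Prop := GraphSC S.init S.term

/-- The open unit square `(0,1)²`. -/
def unitSq : Set (ℝ × ℝ) := Set.Ioo (0 : ℝ) 1 ×ˢ Set.Ioo (0 : ℝ) 1

/-- The rectangular open set condition. -/
def ROSC (S : BoxLikeGIFS V E) : Prop :=
  (∀ e : E, S.map e '' unitSq ⊆ unitSq) ∧
  ∀ e e' : E, e ≠ e' → S.init e = S.init e' →
    Disjoint (S.map e '' unitSq) (S.map e' '' unitSq)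

/-- Positive weights summing to one at each vertex. -/
def IsWeights [Fintype E] (S : BoxLikeGIFS V E) (p : E → ℝ) : Prop :=
  (∀ e, 0 < p e) ∧ ∀ v : V, (∑ e : E, if S.init e = v then p e else 0) = 1

/-- `μ` is the associated graph-directed box-like self-affine measure family. -/
def IsGDMeasure [Fintype E] (S : BoxLikeGIFS V E) (p : E → ℝ)
    (μ : V → Measure (ℝ × ℝ)) : Prop :=
  (∀ v, IsProbabilityMeasure (μ v)) ∧
  ∀ v : V, μ v =
    ∑ e : E, if S.init e = v then
      ENNReal.ofReal (p e) • ((μ (S.term e)).map (S.map e)) else (0 : Measure (ℝ × ℝ))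

/-- `X` is the associated graph-directed self-affine carpet family. -/
def IsGDAttractor (S : BoxLikeGIFS V E) (X : V → Set (ℝ × ℝ)) : Prop :=
  (∀ v, (X v).Nonempty ∧ IsCompact (X v)) ∧
  ∀ v : V, X v = ⋃ e : E, ⋃ _ : S.init e = v, S.map e '' X (S.term e)

/-- The matrix `F^{(q)}_{x,y}` of the system. -/
def Fmat (S : BoxLikeGIFS V E) (p : E → ℝ) (q x y : ℝ) : Matrix E E ℝ :=
  FmatG S.init S.term p S.a S.b q x y

/-- The `(2#E) × (2#E)` block matrix `𝒢^{(q)}_{x,y}`, indexed by `E × Bool`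
(`false` = first index of the block, `true` = second). -/
def Gmat (S : BoxLikeGIFS V E) (p : E → ℝ) (τx τy : V → ℝ) (q x y : ℝ) :
    Matrix (E × Bool) (E × Bool) ℝ := fun i j =>
  if S.term i.1 = S.init j.1 then
    if S.diag j.1 then
      if i.2 = false ∧ j.2 = false then
        p j.1 ^ q * S.a j.1 ^ (x + τx (S.term j.1)) * S.b j.1 ^ (y - τx (S.term j.1))
      else if i.2 = true ∧ j.2 = true then
        p j.1 ^ q * S.b j.1 ^ (x + τy (S.term j.1)) * S.a j.1 ^ (y - τy (S.term j.1))
      else 0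
    else
      if i.2 = false ∧ j.2 = true then
        p j.1 ^ q * S.a j.1 ^ (x + τy (S.term j.1)) * S.b j.1 ^ (y - τy (S.term j.1))
      else if i.2 = true ∧ j.2 = false then
        p j.1 ^ q * S.b j.1 ^ (x + τx (S.term j.1)) * S.a j.1 ^ (y - τx (S.term j.1))
      else 0
  else 0

/-! ### Words -/

/-- An admissible word: consecutive edges are composable. -/
def Admissible (S : BoxLikeGIFS V E) (w : List E) : Prop :=
  List.Chain' (fun e e' => S.term e = S.init e') w

/-- `(c_w, d_w)`: width and height of the rectangle `ψ_w([0,1]²)`. -/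
def wdims (S : BoxLikeGIFS V E) : List E → ℝ × ℝ
  | [] => (1, 1)
  | e :: w =>
      if S.diag e then (S.a e * (wdims S w).1, S.b e * (wdims S w).2)
      else (S.a e * (wdims S w).2, S.b e * (wdims S w).1)

/-- Whether `T_w` is diagonal (`true`) or anti-diagonal (`false`). -/
def wordDiag (S : BoxLikeGIFS V E) : List E → Bool
  | [] => true
  | e :: w => S.diag e == wordDiag S w

/-- The larger singular value `α₁(w) = max(c_w, d_w)` of `T_w`. -/
def alpha1 (S : BoxLikeGIFS V E) (w : List E) : ℝ := max (S.wdims w).1 (S.wdims w).2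

/-- The smaller singular value `α₂(w) = min(c_w, d_w)` of `T_w`. -/
def alpha2 (S : BoxLikeGIFS V E) (w : List E) : ℝ := min (S.wdims w).1 (S.wdims w).2

/-- Initial vertex of a (nonempty) word. -/
def wordInit [Nonempty V] (S : BoxLikeGIFS V E) (w : List E) : V :=
  (w.head?.map S.init).getD (Classical.arbitrary V)

/-- Terminal vertex of a (nonempty) word. -/
def wordTerm [Nonempty V] (S : BoxLikeGIFS V E) (w : List E) : V :=
  (w.getLast?.map S.term).getD (Classical.arbitrary V)

/-- `p_w = p_{w_1} ⋯ p_{w_k}`. -/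
def wordProb (p : E → ℝ) (w : List E) : ℝ := (w.map p).prod

/-- `τ_w(q)`: given the values `τx v`, `τy v` of the `L^q`-spectra of the two coordinate
projections of `μ_v`, this is the `L^q`-spectrum of the projection of `μ_{t(w)} ∘ ψ_w⁻¹`
onto the longest side of `ψ_w([0,1]²)`, i.e. `τx (t w)` if `π_w = π_x` and `τy (t w)`
otherwise. -/
def wordTau [Nonempty V] (S : BoxLikeGIFS V E) (τx τy : V → ℝ) (w : List E) : ℝ :=
  if ((S.wdims w).2 ≤ (S.wdims w).1 ↔ S.wordDiag w = true) then τx (S.wordTerm w)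
  else τy (S.wordTerm w)

/-- The modified singular value function
`φ^{s,q}(w) = p_w^q α₁(w)^{τ_w(q)} α₂(w)^{s - τ_w(q)}`. -/
def msvf [Nonempty V] (S : BoxLikeGIFS V E) (p : E → ℝ) (τx τy : V → ℝ)
    (s q : ℝ) (w : List E) : ℝ :=
  wordProb p w ^ q * S.alpha1 w ^ (S.wordTau τx τy w) *
    S.alpha2 w ^ (s - S.wordTau τx τy w)

/-- The modified singular value function matrix `A_k^{s,q}`. -/
def Amat [Nonempty V] [Fintype E] (S : BoxLikeGIFS V E) (p : E → ℝ) (τx τy : V → ℝ)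
    (s q : ℝ) (k : ℕ) : Matrix V V ℝ := fun v v' =>
  ∑ f : Fin k → E,
    if S.Admissible (List.ofFn f) ∧ S.wordInit (List.ofFn f) = v ∧
        S.wordTerm (List.ofFn f) = v'
    then S.msvf p τx τy s q (List.ofFn f) else 0

/-- The family `E^*_δ` of admissible words whose shortest side drops below `δ`
exactly at the last letter. -/
def EstarDelta (S : BoxLikeGIFS V E) (δ : ℝ) : Set (List E) :=
  {w | w ≠ [] ∧ S.Admissible w ∧ S.alpha2 w < δ ∧ δ ≤ S.alpha2 w.dropLast}

end BoxLikeGIFS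

/-! ### Partition of the projections, for the splitting proposition -/

/-- The projection family: `(v, false) ↦ μ_v^x` and `(v, true) ↦ μ_v^y`. -/
def projMeas {V : Type*} (μ : V → Measure (ℝ × ℝ)) (i : V × Bool) : Measure ℝ :=
  if i.2 then (μ i.1).map Prod.snd else (μ i.1).map Prod.fst

/-- `A`, `B` is a partition of the projection family `{μ_v^x, μ_v^y}_v` into two disjoint
families of cardinality `#V`, on each of which the `L^q`-spectra exist and share a common
value, and which splits `{μ_v^x, μ_v^y}` for each `v`. -/
def GoodPartition {V : Type*} [Fintype V] (μ : V → Measure (ℝ × ℝ))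
    (A B : Finset (V × Bool)) : Prop :=
  Disjoint A B ∧ A ∪ B = Finset.univ ∧
  A.card = Fintype.card V ∧ B.card = Fintype.card V ∧
  ∃ τA τB : ℝ → ℝ,
    (∀ q : ℝ, 0 ≤ q → ∀ i ∈ A, HasLq1 (projMeas μ i) q (τA q)) ∧
    (∀ q : ℝ, 0 ≤ q → ∀ i ∈ B, HasLq1 (projMeas μ i) q (τB q)) ∧
    ∀ v : V, ((v, false) ∈ A ∧ (v, true) ∈ B) ∨ ((v, false) ∈ B ∧ (v, true) ∈ A)

end LqGIFS

end

open LqGIFS MeasureTheory Filter Set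

/-!
Every edge `e` maps a copy of the projections of `μ_{t(e)}` into those of `μ_{i(e)}`, so the
spectra of the projections can only increase from `t(e)` to `i(e)`; strong connectivity turns these
inequalities into equalities. Hence diagonal edges preserve the pair `(τx, τy)`, anti-diagonal edges
swap it, and `τx + τy` is a constant `t`. If the exponents follow a fixed coordinate direction
instead of the longest side, one gets a weight which is multiplicative along words and differs from
`φ^{s,q}` by a power `t - s` of the ratio of the side lengths. So `φ^{s,q}` is submultiplicative for
`s ≤ t` and supermultiplicative for `s ≥ t`.

For `s > γ` the sum of `φ^{s,q}` over all admissible words converges, which gives (a). For `s < γ`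
the sums over the words of length `n` tend to infinity. If `φ^{s,q}` is submultiplicative, cutting
each word at the moment it leaves `{α₂ ≥ δ}` shows that the sum over `E^*_δ` is at least `1`. If it
is supermultiplicative, there is a finite set `Λ` of loops of equal length at a vertex with
`∑_Λ φ^{s,q} > 1`; the same argument applies to the multiplicative weights on words over `Λ`, and
these exit near a word of `E^*_δ`.
-/

namespace LqGIFS

/-! ### Growth rates -/

section GrowthRate

variable {a : ℕ → ℝ} {ρ L : ℝ}

lemma summable_pow_mul_of_tendsto_rpow_inv (ha : ∀ n, 0 ≤ a n)
    (hL : Tendsto (fun n : ℕ => a n ^ (n : ℝ)⁻¹) atTop (nhds L)) (hρ : 0 ≤ ρ)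
    (hρL : ρ * L < 1) : Summable fun n => ρ ^ n * a n := by
  obtain ⟨θ, hθ, hθ1⟩ := exists_between (max_lt hρL one_pos)
  have hlt : ∀ᶠ n : ℕ in atTop, ρ * a n ^ (n : ℝ)⁻¹ < θ :=
    (hL.const_mul ρ).eventually_lt_const ((le_max_left _ _).trans_lt hθ)
  refine Summable.of_norm_bounded_eventually_nat
    (summable_geometric_of_lt_one ((le_max_right _ _).trans hθ.le) hθ1) ?_
  filter_upwards [hlt, eventually_ne_atTop 0] with n hn hn0
  rw [Real.norm_of_nonneg (mul_nonneg (pow_nonneg hρ n) (ha n)),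
    ← Real.rpow_inv_natCast_pow (ha n) hn0, ← mul_pow]
  exact pow_le_pow_left₀ (mul_nonneg hρ (Real.rpow_nonneg (ha n) _)) hn.le n

lemma tendsto_pow_mul_atTop_of_tendsto_rpow_inv (ha : ∀ n, 0 ≤ a n)
    (hL : Tendsto (fun n : ℕ => a n ^ (n : ℝ)⁻¹) atTop (nhds L)) (hρL : 1 < ρ * L) :
    Tendsto (fun n => ρ ^ n * a n) atTop atTop := by
  obtain ⟨θ, hθ1, hθ⟩ := exists_between hρL
  have hlt : ∀ᶠ n : ℕ in atTop, θ < ρ * a n ^ (n : ℝ)⁻¹ :=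
    (hL.const_mul ρ).eventually_const_lt hθ
  refine tendsto_atTop_mono' _ ?_ (tendsto_pow_atTop_atTop_of_one_lt hθ1)
  filter_upwards [hlt, eventually_ne_atTop 0] with n hn hn0
  rw [← Real.rpow_inv_natCast_pow (ha n) hn0, ← mul_pow]
  exact pow_le_pow_left₀ (zero_le_one.trans hθ1.le) hn.le n

lemma le_of_tendsto_log_div_neg_log {f g : ℝ → ℝ} {K c τ τ' : ℝ} (hc : 0 < c) (hK : 0 < K)
    (hf : ∀ δ, 0 < δ → 0 < f δ) (hfg : ∀ δ, 0 < δ → f (δ / c) ≤ K * g δ)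
    (hτ : Tendsto (fun δ => Real.log (f δ) / -Real.log δ) (nhdsWithin 0 (Ioi 0)) (nhds τ))
    (hτ' : Tendsto (fun δ => Real.log (g δ) / -Real.log δ) (nhdsWithin 0 (Ioi 0)) (nhds τ')) :
    τ ≤ τ' := by
  have hlog : Tendsto (fun δ : ℝ => -Real.log δ) (nhdsWithin 0 (Ioi 0)) atTop :=
    tendsto_neg_atBot_atTop.comp Real.tendsto_log_nhdsGT_zero
  have hdiv : Tendsto (fun δ : ℝ => δ / c) (nhdsWithin 0 (Ioi 0)) (nhdsWithin 0 (Ioi 0)) := by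
    refine tendsto_nhdsWithin_iff.2 ⟨?_, ?_⟩
    · have h0 : Tendsto (fun δ : ℝ => δ / c) (nhds 0) (nhds (0 / c)) :=
        (continuous_id.div_const c).tendsto 0
      rw [zero_div] at h0
      exact h0.mono_left nhdsWithin_le_nhds
    · filter_upwards [self_mem_nhdsWithin] with δ hδ
      exact div_pos hδ hc
  have hconst (d : ℝ) : Tendsto (fun δ : ℝ => d / -Real.log δ) (nhdsWithin 0 (Ioi 0)) (nhds 0) :=
    hlog.const_div_atTop d
  have hleft : Tendsto (fun δ : ℝ => Real.log (f (δ / c)) / -Real.log (δ / c) *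
      (1 + Real.log c / -Real.log δ)) (nhdsWithin 0 (Ioi 0)) (nhds τ) := by
    simpa using (hτ.comp hdiv).mul ((hconst (Real.log c)).const_add 1)
  have hright : Tendsto (fun δ : ℝ => Real.log K / -Real.log δ + Real.log (g δ) / -Real.log δ)
      (nhdsWithin 0 (Ioi 0)) (nhds τ') := by
    simpa using (hconst (Real.log K)).add hτ'
  refine le_of_tendsto_of_tendsto hleft hright ?_
  filter_upwards [self_mem_nhdsWithin, hlog.eventually_gt_atTop 0,
    (hlog.comp hdiv).eventually_gt_atTop 0] with δ hδ hδ1 hδc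
  have hδ2 : 0 < -Real.log (δ / c) := hδc
  have hfpos : 0 < f (δ / c) := hf _ (div_pos hδ hc)
  have hgpos : 0 < g δ := pos_of_mul_pos_right (hfpos.trans_le (hfg δ hδ)) hK.le
  have hscale : 1 + Real.log c / -Real.log δ = -Real.log (δ / c) / -Real.log δ := by
    rw [Real.log_div (ne_of_gt hδ) hc.ne', eq_div_iff hδ1.ne', add_mul,
      div_mul_cancel₀ _ hδ1.ne']
    ring
  rw [hscale, div_mul_div_cancel₀ hδ2.ne', ← add_div, ← Real.log_mul hK.ne' hgpos.ne']
  exact div_le_div_of_nonneg_right (Real.log_le_log hfpos (hfg δ hδ)) hδ1.le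

end GrowthRate

/-! ### Words and exit words -/

lemma sum_le_sum_of_injOn {ι κ : Type*} {s : Finset ι} {t : Finset κ} {f : ι → ℝ} {g : κ → ℝ}
    (φ : ι → κ) (hφ : MapsTo φ s t) (hinj : InjOn φ s) (hg : ∀ b ∈ t, 0 ≤ g b)
    (hfg : ∀ a ∈ s, f a ≤ g (φ a)) : ∑ a ∈ s, f a ≤ ∑ b ∈ t, g b := by
  calc ∑ a ∈ s, f a ≤ ∑ a ∈ s, g (φ a) := Finset.sum_le_sum hfg
    _ = ∑ b ∈ s.image φ, g b := (Finset.sum_image hinj).symm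
    _ ≤ ∑ b ∈ t, g b := Finset.sum_le_sum_of_subset_of_nonneg
        (Finset.image_subset_iff.2 hφ) fun b hb _ => hg b hb

section Words

variable {α : Type*}

/-- The words of length `n` over a finite alphabet. -/
noncomputable def wordsOfLength (α : Type*) [Finite α] (n : ℕ) : Finset (List α) :=
  (List.finite_length_eq α n).toFinset

lemma mem_wordsOfLength [Finite α] {n : ℕ} {w : List α} :
    w ∈ wordsOfLength α n ↔ w.length = n := by
  simp [wordsOfLength]

lemma sum_wordsOfLength [Fintype α] (n : ℕ) (ψ : List α → ℝ) :
    ∑ w ∈ wordsOfLength α n, ψ w = ∑ f : Fin n → α, ψ (List.ofFn f) := by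
  refine (Finset.sum_bij (fun f _ => List.ofFn f) (fun f _ => ?_)
    (fun f _ g _ h => List.ofFn_injective h) (fun w hw => ?_) fun f _ => rfl).symm
  · simp [mem_wordsOfLength]
  · obtain rfl := mem_wordsOfLength.1 hw
    exact ⟨w.get, Finset.mem_univ _, List.ofFn_get w⟩

lemma sum_wordsOfLength_prod_map [Fintype α] (n : ℕ) (f : α → ℝ) :
    ∑ w ∈ wordsOfLength α n, (w.map f).prod = (∑ a, f a) ^ n := by
  rw [Fintype.sum_pow, sum_wordsOfLength]
  simp [List.map_ofFn, List.prod_ofFn]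

lemma sum_le_tsum_sum_wordsOfLength [Finite α] {ψ : List α → ℝ}
    (hψ0 : ∀ w, 0 ≤ ψ w) (hψ : Summable fun n => ∑ w ∈ wordsOfLength α n, ψ w)
    (F : Finset (List α)) : ∑ w ∈ F, ψ w ≤ ∑' n, ∑ w ∈ wordsOfLength α n, ψ w := by
  rw [← Finset.sum_fiberwise_of_maps_to fun w => Finset.mem_image_of_mem List.length]
  refine le_trans (Finset.sum_le_sum fun n _ => ?_)
    (hψ.sum_le_tsum _ fun n _ => Finset.sum_nonneg fun w _ => hψ0 w)
  exact Finset.sum_le_sum_of_subset_of_nonneg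
    (fun w hw => mem_wordsOfLength.2 (Finset.mem_filter.1 hw).2) fun w _ _ => hψ0 w

/-- The words along which a property `P` of words fails for the first time at the last letter,
provided that `P` is inherited by prefixes. -/
def exitWords (P : List α → Prop) : Set (List α) := {w | w ≠ [] ∧ ¬P w ∧ P w.dropLast}

variable {P : List α → Prop} {N : ℕ}

lemma finite_exitWords [Finite α] (hPN : ∀ w, P w → w.length < N) : (exitWords P).Finite := by
  refine (List.finite_length_le α N).subset fun w hw => ?_
  have hlen := hPN _ hw.2.2
  rw [List.length_dropLast] at hlen
  exact Nat.le_of_pred_lt hlen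

lemma exists_append_mem_exitWords {u v : List α} (hu : P u) (huv : ¬P (u ++ v)) :
    ∃ y z, v = y ++ z ∧ u ++ y ∈ exitWords P := by
  induction v generalizing u with
  | nil => exact absurd (by simpa using hu) huv
  | cons a v ih =>
    by_cases hua : P (u ++ [a])
    · obtain ⟨y, z, rfl, hy⟩ := ih hua (by simpa using huv)
      exact ⟨a :: y, z, rfl, by simpa using hy⟩
    · exact ⟨[a], v, rfl, by simp, hua, by simpa using hu⟩

variable {ψ : List α → ℝ} {X : Finset (List α)}

/-- Cut every word of length `n` at its exit prefix. -/
lemma sum_wordsOfLength_le_sum_exitWords_mul [Finite α] (hψ0 : ∀ w, 0 ≤ ψ w)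
    (hψ : ∀ w u, ψ (w ++ u) ≤ ψ w * ψ u) (hP0 : P []) (hPN : ∀ w, P w → w.length < N)
    (hX : (X : Set (List α)) = exitWords P) {n : ℕ} (hn : N ≤ n) :
    ∑ w ∈ wordsOfLength α n, ψ w ≤
      ∑ x ∈ X, ψ x * ∑ u ∈ wordsOfLength α (n - x.length), ψ u := by
  have hcut (w : List α) : ∃ x u, w.length = n → w = x ++ u ∧ x ∈ X := by
    by_cases hw : w.length = n
    · have hPw : ¬P ([] ++ w) := fun h => (hw ▸ hPN w h).not_ge hn
      obtain ⟨x, u, rfl, hx⟩ := exists_append_mem_exitWords hP0 hPw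
      exact ⟨x, u, fun _ => ⟨rfl, Finset.mem_coe.1 (hX ▸ hx)⟩⟩
    · exact ⟨[], [], fun h => absurd h hw⟩
  choose x u hxu using hcut
  simp_rw [Finset.mul_sum]
  rw [Finset.sum_sigma']
  refine sum_le_sum_of_injOn (fun w => ⟨x w, u w⟩) (fun w hw => ?_) (fun w hw w' hw' h => ?_)
    (fun b _ => mul_nonneg (hψ0 _) (hψ0 _)) fun w hw => ?_
  · have hwn := mem_wordsOfLength.1 hw
    obtain ⟨hw_eq, hwX⟩ := hxu w hwn
    have hlen := congrArg List.length hw_eq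
    rw [List.length_append] at hlen
    exact Finset.mem_sigma.2 ⟨hwX, mem_wordsOfLength.2 (by dsimp only; omega)⟩
  · obtain ⟨hx, hu⟩ := Sigma.mk.inj h
    rw [(hxu w (mem_wordsOfLength.1 hw)).1, (hxu w' (mem_wordsOfLength.1 hw')).1, hx,
      eq_of_heq hu]
  · conv_lhs => rw [(hxu w (mem_wordsOfLength.1 hw)).1]
    exact hψ _ _

/-- Otherwise the sums over words of a fixed length would stay bounded, by the renewal inequality
`sum_wordsOfLength_le_sum_exitWords_mul`. -/
lemma one_le_sum_exitWords_of_submultiplicative [Finite α] (hψ0 : ∀ w, 0 ≤ ψ w)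
    (hψ : ∀ w u, ψ (w ++ u) ≤ ψ w * ψ u)
    (hlim : Tendsto (fun n => ∑ w ∈ wordsOfLength α n, ψ w) atTop atTop)
    (hP0 : P []) (hPN : ∀ w, P w → w.length < N) (hX : (X : Set (List α)) = exitWords P) :
    1 ≤ ∑ x ∈ X, ψ x := by
  by_contra! hlt
  set a : ℕ → ℝ := fun n => ∑ w ∈ wordsOfLength α n, ψ w
  have ha0 (n : ℕ) : 0 ≤ a n := Finset.sum_nonneg fun w _ => hψ0 w
  set M : ℝ := ∑ n ∈ Finset.range N, a n
  have hM0 : 0 ≤ M := Finset.sum_nonneg fun n _ => ha0 n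
  have hbound (n : ℕ) : a n ≤ M := by
    induction n using Nat.strong_induction_on with
    | _ n ih =>
      rcases lt_or_ge n N with hn | hn
      · exact Finset.single_le_sum (fun i _ => ha0 i) (Finset.mem_range.2 hn)
      · have hN : 0 < N := hPN [] hP0
        calc a n ≤ ∑ x ∈ X, ψ x * a (n - x.length) :=
              sum_wordsOfLength_le_sum_exitWords_mul hψ0 hψ hP0 hPN hX hn
          _ ≤ ∑ x ∈ X, ψ x * M := Finset.sum_le_sum fun x hx => by
              have hx0 : x ≠ [] := (hX ▸ Finset.mem_coe.2 hx : x ∈ exitWords P).1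
              exact mul_le_mul_of_nonneg_left
                (ih _ (Nat.sub_lt (hN.trans_le hn) (List.length_pos_iff.2 hx0))) (hψ0 x)
          _ = (∑ x ∈ X, ψ x) * M := (Finset.sum_mul _ _ _).symm
          _ ≤ M := mul_le_of_le_one_left hM0 hlt.le
  obtain ⟨n, hn⟩ := (hlim.eventually_gt_atTop M).exists
  exact (hbound n).not_gt hn

/-- The word over `α` spelled by a word over the alphabet `Λ` of blocks. -/
def joinBlocks {Λ : Finset (List α)} (W : List Λ) : List α := (W.map Subtype.val).flatten

section Blocks

variable {Λ : Finset (List α)} {m : ℕ}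

@[simp]
lemma joinBlocks_nil : joinBlocks ([] : List Λ) = [] := rfl

@[simp]
lemma joinBlocks_cons (l : Λ) (W : List Λ) : joinBlocks (l :: W) = l ++ joinBlocks W := rfl

lemma length_joinBlocks (hΛm : ∀ l ∈ Λ, l.length = m) (W : List Λ) :
    (joinBlocks W).length = W.length * m := by
  induction W with
  | nil => simp
  | cons l W ih => rw [joinBlocks_cons, List.length_append, ih, hΛm l l.2, List.length_cons,
      add_one_mul, add_comm]

lemma injective_joinBlocks (hm : 0 < m) (hΛm : ∀ l ∈ Λ, l.length = m) :
    Function.Injective (joinBlocks (Λ := Λ)) := by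
  intro W W' h
  have hlen : W.length = W'.length := by
    have := congrArg List.length h
    rw [length_joinBlocks hΛm, length_joinBlocks hΛm] at this
    exact Nat.eq_of_mul_eq_mul_right hm this
  have hlens (W : List Λ) : (W.map Subtype.val).map List.length = List.replicate W.length m := by
    refine List.eq_replicate_iff.2 ⟨by simp, fun k hk => ?_⟩
    obtain ⟨l, hl, rfl⟩ := List.mem_map.1 hk
    obtain ⟨l', -, rfl⟩ := List.mem_map.1 hl
    exact hΛm _ l'.2
  exact Subtype.val_injective.list_map
    (List.eq_iff_flatten_eq.2 ⟨h, by rw [hlens, hlens, hlen]⟩)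

lemma exists_joinBlocks_eq_append_of_mem_exitWords {W : List Λ}
    (hW : W ∈ exitWords fun W : List Λ => P (joinBlocks W)) :
    ∃ x z, joinBlocks W = x ++ z ∧ x ∈ exitWords P ∧ ∃ l ∈ Λ, z.length ≤ l.length := by
  obtain ⟨hne, hPW, hPdrop⟩ := hW
  have hsplit : joinBlocks W = joinBlocks W.dropLast ++ (W.getLast hne : List α) := by
    conv_lhs => rw [← List.dropLast_append_getLast hne]
    simp [joinBlocks]
  beta_reduce at hPW
  rw [hsplit] at hPW
  obtain ⟨y, z, hyz, hy⟩ := exists_append_mem_exitWords hPdrop hPW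
  refine ⟨_, z, by rw [hsplit, hyz, List.append_assoc], hy, _, (W.getLast hne).2, ?_⟩
  rw [hyz, List.length_append]
  exact Nat.le_add_left _ _

end Blocks

lemma sum_exitWords_joinBlocks_le [Finite α] (hψ0 : ∀ w, 0 ≤ ψ w) {m : ℕ} (hm : 0 < m)
    {Λ : Finset (List α)} (hΛm : ∀ l ∈ Λ, l.length = m) {C : ℝ}
    (hC : ∀ x z : List α, z.length ≤ m → ψ (x ++ z) ≤ C * ψ x)
    (hX : (X : Set (List α)) = exitWords P) {Y : Finset (List Λ)}
    (hY : (Y : Set (List Λ)) = exitWords fun W : List Λ => P (joinBlocks W)) :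
    ∑ W ∈ Y, ψ (joinBlocks W) ≤ C * (List.finite_length_le α m).toFinset.card * ∑ x ∈ X, ψ x := by
  set Z : Finset (List α) := (List.finite_length_le α m).toFinset
  have hcut (W : List Λ) : ∃ x z, W ∈ Y → joinBlocks W = x ++ z ∧ x ∈ X ∧ z ∈ Z := by
    by_cases hW : W ∈ Y
    · obtain ⟨x, z, hxz, hx, l, hl, hzl⟩ :=
        exists_joinBlocks_eq_append_of_mem_exitWords (hY ▸ Finset.mem_coe.2 hW)
      exact ⟨x, z, fun _ => ⟨hxz, Finset.mem_coe.1 (hX ▸ hx),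
        (Set.Finite.mem_toFinset _).2 (hzl.trans (hΛm l hl).le)⟩⟩
    · exact ⟨[], [], fun h => absurd h hW⟩
  choose x z hxz using hcut
  calc ∑ W ∈ Y, ψ (joinBlocks W) ≤ ∑ b ∈ X ×ˢ Z, C * ψ b.1 := by
        refine sum_le_sum_of_injOn (fun W => (x W, z W))
          (fun W hW => Finset.mem_coe.2 (Finset.mem_product.2 (hxz W hW).2))
          (fun W hW W' hW' h => injective_joinBlocks hm hΛm ?_)
          (fun b _ => (hψ0 _).trans (hC b.1 [] (Nat.zero_le m))) fun W hW => ?_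
        · obtain ⟨hx, hz⟩ := Prod.mk.inj h
          rw [(hxz W hW).1, (hxz W' hW').1, hx, hz]
        · obtain ⟨hW_eq, -, hz⟩ := hxz W hW
          rw [hW_eq]
          exact hC _ _ ((List.finite_length_le α m).mem_toFinset.1 hz)
    _ = C * Z.card * ∑ x ∈ X, ψ x := by
        simp_rw [Finset.sum_product, Finset.sum_const, nsmul_eq_mul, Finset.mul_sum]
        exact Finset.sum_congr rfl fun x _ => by ring

/-- Apply the submultiplicative case to the words over the alphabet `Λ` with the multiplicative
weight `∏ ψ`. -/
lemma one_le_mul_sum_exitWords_of_blocks [Finite α] (hψ0 : ∀ w, 0 ≤ ψ w) {m : ℕ} (hm : 0 < m)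
    {Λ : Finset (List α)} (hΛm : ∀ l ∈ Λ, l.length = m) (hΛ : 1 < ∑ l ∈ Λ, ψ l)
    (hΛψ : ∀ W : List Λ, (W.map fun l => ψ l.1).prod ≤ ψ (joinBlocks W)) {C : ℝ}
    (hC : ∀ x z : List α, z.length ≤ m → ψ (x ++ z) ≤ C * ψ x)
    (hP0 : P []) (hPN : ∀ w, P w → w.length < N) (hX : (X : Set (List α)) = exitWords P) :
    1 ≤ C * (List.finite_length_le α m).toFinset.card * ∑ x ∈ X, ψ x := by
  have hΛN (W : List Λ) (hW : P (joinBlocks W)) : W.length < N := by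
    have hlen := hPN _ hW
    rw [length_joinBlocks hΛm] at hlen
    exact (Nat.le_mul_of_pos_right _ hm).trans_lt hlen
  have hY := (finite_exitWords hΛN).coe_toFinset
  refine le_trans ?_ ((Finset.sum_le_sum fun W _ => hΛψ W).trans
    (sum_exitWords_joinBlocks_le hψ0 hm hΛm hC hX hY))
  refine one_le_sum_exitWords_of_submultiplicative
    (fun W => List.prod_nonneg fun r hr => ?_) (fun W W' => by simp) ?_ hP0 hΛN hY
  · obtain ⟨l, -, rfl⟩ := List.mem_map.1 hr
    exact hψ0 _
  · rw [← Finset.sum_coe_sort Λ ψ] at hΛ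
    simp_rw [sum_wordsOfLength_prod_map]
    exact tendsto_pow_atTop_atTop_of_one_lt hΛ

end Words

/-! ### Moment sums and `L^q`-spectra on the line -/

section MomentSums

/-- The contribution `ν(A)^q` of a set `A` to a moment sum. As in `Dq1`, null sets contribute `0`
even when `q = 0`. -/
noncomputable def setMoment {Ω : Type*} [MeasurableSpace Ω] (ν : Measure Ω) (q : ℝ)
    (A : Set Ω) : ℝ :=
  if ν A = 0 then 0 else (ν A).toReal ^ q

lemma Dq1_eq_tsum_setMoment (ν : Measure ℝ) (δ q : ℝ) :
    Dq1 ν δ q = ∑' k : ℤ, setMoment ν q (meshCube1 δ k) := rfl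

section SetMoment

variable {Ω Ω' : Type*} [MeasurableSpace Ω] [MeasurableSpace Ω'] {ν : Measure Ω}
  {ν' : Measure Ω'} {q : ℝ} {A B : Set Ω}

lemma setMoment_of_null (h : ν A = 0) : setMoment ν q A = 0 := if_pos h

lemma setMoment_nonneg : 0 ≤ setMoment ν q A := by
  unfold setMoment
  split_ifs <;> positivity

lemma setMoment_pos [IsFiniteMeasure ν] (h : ν A ≠ 0) : 0 < setMoment ν q A := by
  rw [setMoment, if_neg h]
  exact Real.rpow_pos_of_pos (ENNReal.toReal_pos h (measure_ne_top ν A)) q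

lemma mul_setMoment_le_setMoment [IsFiniteMeasure ν] {p : ℝ} (hp : 0 < p) (hq : 0 ≤ q)
    {A' : Set Ω'} (h : p * ν.real A ≤ ν'.real A') :
    p ^ q * setMoment ν q A ≤ setMoment ν' q A' := by
  by_cases hA : ν A = 0
  · rw [setMoment_of_null hA, mul_zero]
    exact setMoment_nonneg
  · have hA_pos : 0 < ν.real A := ENNReal.toReal_pos hA (measure_ne_top ν A)
    have hA' : ν' A' ≠ 0 := fun h0 => by
      rw [measureReal_def ν', h0, ENNReal.toReal_zero] at h
      exact h.not_gt (mul_pos hp hA_pos)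
    rw [setMoment, if_neg hA, setMoment, if_neg hA',
      ← Real.mul_rpow hp.le ENNReal.toReal_nonneg]
    exact Real.rpow_le_rpow (mul_pos hp hA_pos).le h hq

lemma setMoment_union_le [IsFiniteMeasure ν] (hq : 0 ≤ q) :
    setMoment ν q (A ∪ B) ≤ 2 ^ q * (setMoment ν q A + setMoment ν q B) := by
  have hlarger {D : Set Ω} (hD : ν.real (A ∪ B) ≤ 2 * ν.real D) :
      setMoment ν q (A ∪ B) ≤ 2 ^ q * setMoment ν q D := by
    have h := mul_setMoment_le_setMoment (ν := ν) (ν' := ν) (A := A ∪ B) (A' := D)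
      (p := 2⁻¹) (by norm_num) hq (by linarith)
    rwa [Real.inv_rpow zero_le_two, inv_mul_le_iff₀ (by positivity)] at h
  have hunion : ν.real (A ∪ B) ≤ ν.real A + ν.real B := measureReal_union_le A B
  rw [mul_add]
  have hA : 0 ≤ 2 ^ q * setMoment ν q A := mul_nonneg (by positivity) setMoment_nonneg
  have hB : 0 ≤ 2 ^ q * setMoment ν q B := mul_nonneg (by positivity) setMoment_nonneg
  rcases le_total (ν.real A) (ν.real B) with hAB | hAB
  · linarith [hlarger (D := B) (by linarith)]
  · linarith [hlarger (D := A) (by linarith)]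

end SetMoment

variable {ν ν' : Measure ℝ} {K : Set ℝ} {δ q : ℝ}

lemma iUnion_meshCube1 (hδ : 0 < δ) : ⋃ k, meshCube1 δ k = univ := by
  refine eq_univ_of_forall fun x => mem_iUnion.2 ⟨⌊x / δ⌋, ?_, ?_⟩
  · exact (le_div_iff₀ hδ).1 (Int.floor_le (x / δ))
  · exact (div_le_iff₀ hδ).1 (Int.lt_floor_add_one (x / δ)).le

lemma finite_meshCube1_inter_nonempty (hK : Bornology.IsBounded K) (hδ : 0 < δ) :
    {k | (meshCube1 δ k ∩ K).Nonempty}.Finite := by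
  obtain ⟨R, hR⟩ := hK.exists_norm_le
  refine (Set.finite_Icc (⌊-R / δ⌋ - 1) ⌈R / δ⌉).subset ?_
  rintro k ⟨x, ⟨hkx, hxk⟩, hx⟩
  obtain ⟨hRx, hxR⟩ := abs_le.1 (hR x hx)
  constructor
  · rw [sub_le_iff_le_add, ← Int.cast_le (R := ℝ)]
    refine (Int.floor_le _).trans ((div_le_iff₀ hδ).2 ?_)
    push_cast
    linarith
  · rw [← Int.cast_le (R := ℝ)]
    exact ((le_div_iff₀ hδ).2 (by linarith)).trans (Int.le_ceil _)

lemma summable_setMoment_meshCube1 (hK : Bornology.IsBounded K) (hν : ν Kᶜ = 0) (hδ : 0 < δ)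
    (q : ℝ) : Summable fun k => setMoment ν q (meshCube1 δ k) := by
  refine summable_of_hasFiniteSupport
    ((finite_meshCube1_inter_nonempty hK hδ).subset fun k hk => ?_)
  by_contra hdisj
  rw [mem_ofPred_eq, not_nonempty_iff_eq_empty, ← disjoint_iff_inter_eq_empty] at hdisj
  exact hk (setMoment_of_null (measure_mono_null hdisj.subset_compl_right hν))

lemma Dq1_pos [IsProbabilityMeasure ν] (hK : Bornology.IsBounded K) (hν : ν Kᶜ = 0)
    (hδ : 0 < δ) (q : ℝ) : 0 < Dq1 ν δ q := by
  obtain ⟨k, hk⟩ : ∃ k, ν (meshCube1 δ k) ≠ 0 := by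
    by_contra! hnull
    have huniv := measure_iUnion_null hnull
    rw [iUnion_meshCube1 hδ, measure_univ] at huniv
    exact one_ne_zero huniv
  rw [Dq1_eq_tsum_setMoment]
  exact (summable_setMoment_meshCube1 hK hν hδ q).tsum_pos (fun _ => setMoment_nonneg) k
    (setMoment_pos hk)

lemma exists_equiv_meshCube1_subset_preimage {c : ℝ} (hc : c ≠ 0) (d : ℝ) (hδ : 0 < δ) :
    ∃ j : ℤ ≃ ℤ, ∀ k, meshCube1 (δ / |c|) k ⊆
      (fun x => c * x + d) ⁻¹' (meshCube1 δ (j k) ∪ meshCube1 δ (j k + 1)) := by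
  have hd := (le_div_iff₀ hδ).1 (Int.floor_le (d / δ))
  have hd' := (div_lt_iff₀ hδ).1 (Int.lt_floor_add_one (d / δ))
  have hmem {y : ℝ} {j : ℤ} (h : (j : ℝ) * δ ≤ y) (h' : y ≤ ((j : ℝ) + 2) * δ) :
      y ∈ meshCube1 δ j ∪ meshCube1 δ (j + 1) := by
    refine (le_total y (((j : ℝ) + 1) * δ)).imp (fun hy => ⟨h, hy⟩) fun hy => ⟨?_, ?_⟩
    · push_cast
      exact hy
    · push_cast
      linarith
  have hcube {k : ℤ} {x : ℝ} (hx : x ∈ meshCube1 (δ / |c|) k) :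
      (k : ℝ) * δ ≤ |c| * x ∧ |c| * x ≤ ((k : ℝ) + 1) * δ := by
    obtain ⟨h, h'⟩ := hx
    rw [← mul_div_assoc, div_le_iff₀ (abs_pos.2 hc)] at h
    rw [← mul_div_assoc, le_div_iff₀ (abs_pos.2 hc)] at h'
    constructor <;> linarith
  rcases abs_choice c with hc' | hc'
  · refine ⟨Equiv.addRight ⌊d / δ⌋, fun k x hx => ?_⟩
    obtain ⟨h, h'⟩ := hc' ▸ hcube hx
    apply hmem <;> simp only [Equiv.coe_addRight] <;> push_cast <;> linarith
  · refine ⟨Equiv.subLeft (⌊d / δ⌋ - 1), fun k x hx => ?_⟩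
    obtain ⟨h, h'⟩ := hc' ▸ hcube hx
    apply hmem <;> simp only [Equiv.subLeft_apply] <;> push_cast <;> linarith

lemma tsum_le_mul_tsum_of_le_add {ι κ : Type*} {g : ι → ℝ} {g' : κ → ℝ} {M : ℝ}
    (e₁ e₂ : ι ≃ κ) (hg : ∀ k, 0 ≤ g k) (hg' : Summable g')
    (h : ∀ k, g k ≤ M * (g' (e₁ k) + g' (e₂ k))) : ∑' k, g k ≤ M * 2 * ∑' k, g' k := by
  have h₁ : Summable fun k => g' (e₁ k) := e₁.summable_iff.2 hg'
  have h₂ : Summable fun k => g' (e₂ k) := e₂.summable_iff.2 hg'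
  have hsum := (h₁.add h₂).mul_left M
  calc ∑' k, g k ≤ ∑' k, M * (g' (e₁ k) + g' (e₂ k)) :=
        (hsum.of_nonneg_of_le hg h).tsum_le_tsum h hsum
    _ = M * 2 * ∑' k, g' k := by
        rw [tsum_mul_left, h₁.tsum_add h₂, e₁.tsum_eq, e₂.tsum_eq]
        ring

variable {c d p : ℝ}

lemma Dq1_le_of_smul_map_le [IsFiniteMeasure ν] [IsFiniteMeasure ν'] (hc : c ≠ 0) (hp : 0 < p)
    (hq : 0 ≤ q) (hle : ENNReal.ofReal p • ν.map (fun x => c * x + d) ≤ ν')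
    (hK : Bornology.IsBounded K) (hν' : ν' Kᶜ = 0) (hδ : 0 < δ) :
    Dq1 ν (δ / |c|) q ≤ (p ^ q)⁻¹ * 2 ^ q * 2 * Dq1 ν' δ q := by
  obtain ⟨j, hj⟩ := exists_equiv_meshCube1_subset_preimage hc d hδ
  rw [Dq1_eq_tsum_setMoment, Dq1_eq_tsum_setMoment]
  refine tsum_le_mul_tsum_of_le_add j (j.trans (Equiv.addRight 1)) (fun _ => setMoment_nonneg)
    (summable_setMoment_meshCube1 hK hν' hδ q) fun k => ?_
  set U : Set ℝ := meshCube1 δ (j k) ∪ meshCube1 δ (j k + 1)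
  have hU : MeasurableSet U := measurableSet_Icc.union measurableSet_Icc
  have hmass : p * ν.real (meshCube1 (δ / |c|) k) ≤ ν'.real U := by
    calc p * ν.real (meshCube1 (δ / |c|) k)
        ≤ p * (ν.map fun x => c * x + d).real U := by
          rw [map_measureReal_apply (by fun_prop) hU]
          exact mul_le_mul_of_nonneg_left (measureReal_mono (hj k)) hp.le
      _ = (ENNReal.ofReal p • ν.map fun x => c * x + d).real U := by
          rw [measureReal_ennreal_smul_apply, ENNReal.toReal_ofReal hp.le]
      _ ≤ ν'.real U := ENNReal.toReal_mono (measure_ne_top ν' U) (hle U)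
  have hpq : 0 < p ^ q := Real.rpow_pos_of_pos hp q
  rw [mul_assoc, ← div_eq_inv_mul, le_div_iff₀' hpq]
  exact (mul_setMoment_le_setMoment hp hq hmass).trans (setMoment_union_le hq)

lemma HasLq1.le_of_smul_map_le [IsProbabilityMeasure ν] [IsProbabilityMeasure ν'] (hc : c ≠ 0)
    (hp : 0 < p) (hq : 0 ≤ q) (hle : ENNReal.ofReal p • ν.map (fun x => c * x + d) ≤ ν')
    (hK : Bornology.IsBounded K) (hν : ν Kᶜ = 0) (hν' : ν' Kᶜ = 0) {τ τ' : ℝ}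
    (hτ : HasLq1 ν q τ) (hτ' : HasLq1 ν' q τ') : τ ≤ τ' :=
  le_of_tendsto_log_div_neg_log (abs_pos.2 hc) (by positivity : 0 < (p ^ q)⁻¹ * 2 ^ q * 2)
    (fun _ hδ => Dq1_pos hK hν hδ q)
    (fun _ hδ => Dq1_le_of_smul_map_le hc hp hq hle hK hν' hδ) hτ hτ'

end MomentSums

namespace BoxLikeGIFS

/-! ### Splitting of the projections -/

section Coordinates

lemma not_beq (i d : Bool) : ((!i) == d) = !(i == d) := by
  cases i <;> cases d <;> rfl

lemma beq_assoc (i d d' : Bool) : ((i == d) == d') = (i == (d == d')) := by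
  cases i <;> cases d <;> cases d' <;> rfl

/-- The coordinate of a pair in the direction `i`, where `false` encodes the first coordinate
direction and `true` the second one. -/
def coord (i : Bool) (z : ℝ × ℝ) : ℝ := if i then z.2 else z.1

lemma measurable_coord (i : Bool) : Measurable (coord i) := by
  cases i
  · exact measurable_fst
  · exact measurable_snd

lemma abs_coord_le_norm (i : Bool) (z : ℝ × ℝ) : |coord i z| ≤ ‖z‖ := by
  cases i
  · exact norm_fst_le z
  · exact norm_snd_le z

lemma norm_le_of_abs_coord_le {z : ℝ × ℝ} {R : ℝ} (h : ∀ i, |coord i z| ≤ R) : ‖z‖ ≤ R :=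
  max_le (h false) (h true)

end Coordinates

section Maps

variable {V E : Type*} (S : BoxLikeGIFS V E)

/-- The contraction ratio of `ψ_e` onto the coordinate direction `i`. -/
def ratio (e : E) (i : Bool) : ℝ := coord i (S.a e, S.b e)

/-- The entry of `T_e` in the row `i`, with its sign. -/
def slope (e : E) (i : Bool) : ℝ := coord i (S.sa e * S.a e, S.sb e * S.b e)

lemma ratio_mem_Ioo (e : E) (i : Bool) : S.ratio e i ∈ Ioo 0 1 := by
  cases i
  · exact S.a_mem e
  · exact S.b_mem e

lemma abs_slope (e : E) (i : Bool) : |S.slope e i| = S.ratio e i := by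
  have habs {σ x : ℝ} (hσ : σ = 1 ∨ σ = -1) (hx : 0 < x) : |σ * x| = x := by
    rcases hσ with rfl | rfl <;> simp [abs_of_pos hx]
  cases i
  · exact habs (S.sa_mem e) (S.a_mem e).1
  · exact habs (S.sb_mem e) (S.b_mem e).1

lemma slope_ne_zero (e : E) (i : Bool) : S.slope e i ≠ 0 :=
  abs_pos.1 ((S.ratio_mem_Ioo e i).1.trans_eq (S.abs_slope e i).symm)

lemma coord_map (e : E) (i : Bool) (z : ℝ × ℝ) :
    coord i (S.map e z) = S.slope e i * coord (i == S.diag e) z + coord i (S.trans e) := by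
  cases i <;> cases hd : S.diag e <;> simp [coord, map, slope, hd]

lemma measurable_map (e : E) : Measurable (S.map e) := by
  unfold map
  split_ifs <;> fun_prop

lemma norm_map_le {e : E} {r : ℝ} (hr : ∀ i, S.ratio e i ≤ r) (z : ℝ × ℝ) :
    ‖S.map e z‖ ≤ r * ‖z‖ + ‖S.trans e‖ := by
  refine norm_le_of_abs_coord_le fun i => ?_
  rw [coord_map]
  refine (abs_add_le _ _).trans (add_le_add ?_ (abs_coord_le_norm i _))
  rw [abs_mul, abs_slope]
  exact mul_le_mul (hr i) (abs_coord_le_norm _ z) (abs_nonneg _)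
    ((S.ratio_mem_Ioo e i).1.le.trans (hr i))

lemma exists_ratio_le [Finite E] : ∃ r ∈ Ioo (0 : ℝ) 1, ∀ e i, S.ratio e i ≤ r := by
  have hmax : ∃ o : Option (E × Bool), ∀ o' : Option (E × Bool),
      o'.elim (1 / 2) (fun x => S.ratio x.1 x.2) ≤ o.elim (1 / 2) fun x => S.ratio x.1 x.2 :=
    Finite.exists_max _
  obtain ⟨o, ho⟩ := hmax
  refine ⟨_, ?_, fun e i => ho (some (e, i))⟩
  cases o with
  | none => exact ⟨one_half_pos, one_half_lt_one⟩
  | some x => exact S.ratio_mem_Ioo x.1 x.2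

lemma exists_forall_add_one_lt_norm [Finite E] :
    ∃ R₀ : ℝ, ∀ e z R, R₀ ≤ R → R < ‖S.map e z‖ → R + 1 < ‖z‖ := by
  obtain ⟨r, ⟨hr0, hr1⟩, hr⟩ := S.exists_ratio_le
  obtain ⟨T, hT⟩ := (Set.finite_range fun e => ‖S.trans e‖).bddAbove
  refine ⟨(r + T) / (1 - r), fun e z R hR hz => ?_⟩
  rw [div_le_iff₀ (sub_pos.2 hr1)] at hR
  have hmap := S.norm_map_le (hr e) z
  have htrans : ‖S.trans e‖ ≤ T := hT (mem_range_self e)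
  refine lt_of_mul_lt_mul_left (?_ : r * (R + 1) < r * ‖z‖) hr0.le
  linarith

end Maps

section Measures

variable {V E : Type*} [Fintype E] {S : BoxLikeGIFS V E} {p : E → ℝ} {μ : V → Measure (ℝ × ℝ)}

lemma IsWeights.sum_ofReal (hp : S.IsWeights p) (v : V) :
    ∑ e, (if S.init e = v then ENNReal.ofReal (p e) else 0) = 1 := by
  rw [← ENNReal.ofReal_one, ← hp.2 v, ENNReal.ofReal_sum_of_nonneg]
  · exact Finset.sum_congr rfl fun e _ => by split_ifs <;> simp
  · exact fun e _ => by split_ifs <;> simp [(hp.1 e).le]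

lemma IsGDMeasure.measure_le_of_preimage (hp : S.IsWeights p) (hμ : S.IsGDMeasure p μ)
    {A : Set (ℝ × ℝ)} (hA : MeasurableSet A) {ε : ENNReal}
    (h : ∀ e, μ (S.term e) (S.map e ⁻¹' A) ≤ ε) (v : V) : μ v A ≤ ε := by
  rw [hμ.2 v, Measure.finsetSum_apply]
  calc _ ≤ ∑ e, (if S.init e = v then ENNReal.ofReal (p e) else 0) * ε := by
        refine Finset.sum_le_sum fun e _ => ?_
        split_ifs
        · rw [Measure.smul_apply, smul_eq_mul, Measure.map_apply (S.measurable_map e) hA]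
          exact mul_le_mul_right (h e) _
        · simp
    _ = ε := by rw [← Finset.sum_mul, hp.sum_ofReal, one_mul]

lemma IsGDMeasure.smul_map_le (hμ : S.IsGDMeasure p μ) (e : E) :
    ENNReal.ofReal (p e) • (μ (S.term e)).map (S.map e) ≤ μ (S.init e) := by
  have hterm := Finset.single_le_sum
    (f := fun e' => if S.init e' = S.init e then
      ENNReal.ofReal (p e') • (μ (S.term e')).map (S.map e') else 0)
    (fun _ _ => Measure.zero_le _) (Finset.mem_univ e)
  rw [if_pos rfl] at hterm
  rwa [hμ.2 (S.init e)]

/-- By self-similarity the mass outside the ball of radius `R₀` is at most the mass outside the ball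
of radius `R₀ + n`, for every `n`. -/
lemma IsGDMeasure.exists_isBounded [Finite V] (hp : S.IsWeights p) (hμ : S.IsGDMeasure p μ) :
    ∃ K, Bornology.IsBounded K ∧ ∀ v, μ v Kᶜ = 0 := by
  obtain ⟨R₀, hR₀⟩ := S.exists_forall_add_one_lt_norm
  have hiter (n : ℕ) {ε : ENNReal} (h : ∀ v, μ v (Metric.closedBall 0 (R₀ + n))ᶜ ≤ ε) (v : V) :
      μ v (Metric.closedBall 0 R₀)ᶜ ≤ ε := by
    induction n with
    | zero => simpa using h v
    | succ n ih =>
      refine ih (hμ.measure_le_of_preimage hp measurableSet_closedBall.compl fun e => ?_)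
      refine (measure_mono fun z hz => ?_).trans (h (S.term e))
      simp only [mem_preimage, mem_compl_iff, mem_closedBall_zero_iff, not_le, Nat.cast_add,
        Nat.cast_one, ← add_assoc] at hz ⊢
      exact hR₀ e z _ (le_add_of_nonneg_right n.cast_nonneg) hz
  have htail (v : V) :
      Tendsto (fun n : ℕ => μ v (Metric.closedBall 0 (R₀ + n))ᶜ) atTop (nhds 0) := by
    have := hμ.1 v
    have hlim := tendsto_measure_compl_closedBall_of_isTightMeasureSet
      (isTightMeasureSet_singleton (μ := μ v)) 0
    simp only [mem_singleton_iff, iSup_iSup_eq_left] at hlim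
    exact hlim.comp (tendsto_atTop_add_const_left _ R₀ tendsto_natCast_atTop_atTop)
  refine ⟨Metric.closedBall 0 R₀, Metric.isBounded_closedBall,
    fun v => le_antisymm (le_of_forall_pos_le_add fun ε hε => ?_) bot_le⟩
  obtain ⟨n, hn⟩ := (eventually_all.2 fun v => (htail v).eventually_le_const hε).exists
  rw [zero_add]
  exact hiter n hn v

end Measures

section Splitting

variable {V E : Type*} {S : BoxLikeGIFS V E} {τx τy : V → ℝ}

/-- The pair `τx, τy` as a function of a vertex and a coordinate direction. -/
def dirTau (τx τy : V → ℝ) (v : V) (i : Bool) : ℝ := coord i (τx v, τy v)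

/-- The pair `τx, τy` is carried along the edges of the system: diagonal edges preserve it and
anti-diagonal edges swap it. This is the splitting of the projections. -/
def IsSplit (S : BoxLikeGIFS V E) (τx τy : V → ℝ) : Prop :=
  ∀ e i, dirTau τx τy (S.init e) i = dirTau τx τy (S.term e) (i == S.diag e)

lemma dirTau_add_dirTau_not (v : V) (i : Bool) :
    dirTau τx τy v i + dirTau τx τy v (!i) = τx v + τy v := by
  cases i
  · rfl
  · exact add_comm _ _

lemma dirTau_beq_add_dirTau_not_beq (v : V) (i d : Bool) :
    dirTau τx τy v (i == d) + dirTau τx τy v ((!i) == d) = τx v + τy v := by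
  rw [not_beq, dirTau_add_dirTau_not]

lemma StronglyConnected.eq_of_edge_le (hSC : S.StronglyConnected) {f : V → ℝ}
    (hf : ∀ e, f (S.term e) ≤ f (S.init e)) (v v' : V) : f v = f v' := by
  have hle (v v' : V) : f v' ≤ f v := by
    induction hSC v v' with
    | single h =>
      obtain ⟨e, rfl, rfl⟩ := h
      exact hf e
    | tail _ h ih =>
      obtain ⟨e, rfl, rfl⟩ := h
      exact (hf e).trans ih
  exact le_antisymm (hle v' v) (hle v v')

lemma IsSplit.exists_add_eq [Nonempty V] (hτ : S.IsSplit τx τy) (hSC : S.StronglyConnected) :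
    ∃ t, ∀ v, τx v + τy v = t := by
  refine ⟨_, fun v => hSC.eq_of_edge_le (f := fun v => τx v + τy v) (fun e => le_of_eq ?_) v
    (Classical.arbitrary V)⟩
  rw [← dirTau_add_dirTau_not (S.init e) false, hτ, hτ, dirTau_beq_add_dirTau_not_beq]

/-- Going around cycles, the monotone quantity `τx + τy` has to be constant. -/
lemma isSplit_of_dirTau_le (hSC : S.StronglyConnected)
    (h : ∀ e i, dirTau τx τy (S.term e) (i == S.diag e) ≤ dirTau τx τy (S.init e) i) :
    S.IsSplit τx τy := by
  have hsum (e : E) (i : Bool) : τx (S.term e) + τy (S.term e) ≤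
      dirTau τx τy (S.term e) (i == S.diag e) + dirTau τx τy (S.init e) (!i) := by
    rw [← dirTau_beq_add_dirTau_not_beq (S.term e) i (S.diag e)]
    exact add_le_add_right (h e !i) _
  have hconst := hSC.eq_of_edge_le (f := fun v => τx v + τy v) fun e =>
    (hsum e false).trans ((add_le_add_left (h e false) _).trans_eq (dirTau_add_dirTau_not _ _))
  refine fun e i => le_antisymm ?_ (h e i)
  have hinit := dirTau_add_dirTau_not (τx := τx) (τy := τy) (S.init e) i
  linarith [hsum e i, hconst (S.init e) (S.term e)]

variable [Fintype E] {p : E → ℝ} {μ : V → Measure (ℝ × ℝ)} {q : ℝ}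

lemma IsGDMeasure.dirTau_le [Finite V] (hp : S.IsWeights p) (hμ : S.IsGDMeasure p μ)
    (hq : 0 ≤ q) (hτ : ∀ v i, HasLq1 ((μ v).map (coord i)) q (dirTau τx τy v i)) (e : E)
    (i : Bool) : dirTau τx τy (S.term e) (i == S.diag e) ≤ dirTau τx τy (S.init e) i := by
  obtain ⟨K, hK, hμK⟩ := hμ.exists_isBounded hp
  obtain ⟨R, hR⟩ := hK.exists_norm_le
  have hprob := hμ.1
  have hproj (v : V) (i : Bool) : IsProbabilityMeasure ((μ v).map (coord i)) :=
    Measure.isProbabilityMeasure_map (measurable_coord i).aemeasurable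
  have hnull (v : V) (i : Bool) : (μ v).map (coord i) (Metric.closedBall 0 R)ᶜ = 0 := by
    rw [Measure.map_apply (measurable_coord i) measurableSet_closedBall.compl]
    refine measure_mono_null (?_ : _ ⊆ Kᶜ) (hμK v)
    intro z hz hzK
    refine hz ?_
    exact mem_closedBall_zero_iff.2 ((abs_coord_le_norm i z).trans (hR z hzK))
  have hdom : ENNReal.ofReal (p e) • ((μ (S.term e)).map (coord (i == S.diag e))).map
      (fun x => S.slope e i * x + coord i (S.trans e)) ≤ (μ (S.init e)).map (coord i) := by
    rw [Measure.map_map (by fun_prop) (measurable_coord _)]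
    have hmap := Measure.map_mono (hμ.smul_map_le e) (measurable_coord i)
    rw [Measure.map_smul, Measure.map_map (measurable_coord i) (S.measurable_map e)] at hmap
    rwa [show coord i ∘ S.map e = _ from funext (S.coord_map e i)] at hmap
  exact HasLq1.le_of_smul_map_le (S.slope_ne_zero e i) (hp.1 e) hq hdom
    Metric.isBounded_closedBall (hnull _ _) (hnull _ _) (hτ _ _) (hτ _ _)

lemma IsGDMeasure.isSplit [Finite V] (hSC : S.StronglyConnected) (hp : S.IsWeights p)
    (hμ : S.IsGDMeasure p μ) (hq : 0 ≤ q) (hτx : ∀ v, HasLq1 ((μ v).map Prod.fst) q (τx v))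
    (hτy : ∀ v, HasLq1 ((μ v).map Prod.snd) q (τy v)) : S.IsSplit τx τy :=
  isSplit_of_dirTau_le hSC (hμ.dirTau_le hp hq fun v i => by
    cases i
    · exact hτx v
    · exact hτy v)

end Splitting

end BoxLikeGIFS

namespace BoxLikeGIFS

/-! ### Words -/

section Sides

variable {V E : Type*} (S : BoxLikeGIFS V E)

/-- The side length of the rectangle `ψ_w([0,1]²)` in the coordinate direction `i`. -/
def side (w : List E) (i : Bool) : ℝ := coord i (S.wdims w)

/-- The coordinate direction of the longest side of `ψ_w([0,1]²)`, the first one in case of a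
tie, as in the definition of `π_w`. -/
noncomputable def longDir (w : List E) : Bool := decide (S.side w false < S.side w true)

lemma side_nil (i : Bool) : S.side [] i = 1 := by
  cases i <;> rfl

lemma side_cons (e : E) (w : List E) (i : Bool) :
    S.side (e :: w) i = S.ratio e i * S.side w (i == S.diag e) := by
  cases i <;> cases hd : S.diag e <;> simp [side, ratio, coord, wdims, hd]

lemma wordDiag_append (w u : List E) :
    S.wordDiag (w ++ u) = (S.wordDiag w == S.wordDiag u) := by
  induction w with
  | nil => simp [wordDiag]
  | cons e w ih => rw [List.cons_append, wordDiag, wordDiag, ih, beq_assoc]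

lemma side_append (w u : List E) (i : Bool) :
    S.side (w ++ u) i = S.side w i * S.side u (i == S.wordDiag w) := by
  induction w generalizing i with
  | nil => simp [side_nil, wordDiag]
  | cons e w ih => rw [List.cons_append, side_cons, side_cons, ih, mul_assoc, wordDiag, beq_assoc]

lemma side_pos (w : List E) (i : Bool) : 0 < S.side w i := by
  induction w generalizing i with
  | nil => exact one_pos.trans_eq (S.side_nil i).symm
  | cons e w ih => exact (mul_pos (S.ratio_mem_Ioo e i).1 (ih _)).trans_eq (S.side_cons e w i).symm

lemma side_le_pow {r : ℝ} (hr : ∀ e i, S.ratio e i ≤ r) (w : List E) (i : Bool) :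
    S.side w i ≤ r ^ w.length := by
  induction w generalizing i with
  | nil => simp [side_nil]
  | cons e w ih =>
    rw [side_cons, List.length_cons, pow_succ']
    exact mul_le_mul (hr e i) (ih _) (S.side_pos w _).le ((S.ratio_mem_Ioo e i).1.le.trans (hr e i))

lemma side_not_longDir_le (w : List E) : S.side w (!S.longDir w) ≤ S.side w (S.longDir w) := by
  unfold longDir
  by_cases h : S.side w false < S.side w true
  · simp [h, h.le]
  · simp [h, not_lt.1 h]

lemma alpha1_eq_side (w : List E) : S.alpha1 w = S.side w (S.longDir w) := by
  unfold longDir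
  by_cases h : S.side w false < S.side w true
  · rw [decide_eq_true h]
    exact max_eq_right h.le
  · rw [decide_eq_false h]
    exact max_eq_left (not_lt.1 h)

lemma alpha2_eq_side (w : List E) : S.alpha2 w = S.side w (!S.longDir w) := by
  unfold longDir
  by_cases h : S.side w false < S.side w true
  · rw [decide_eq_true h]
    exact min_eq_left h.le
  · rw [decide_eq_false h]
    exact min_eq_right (not_lt.1 h)

lemma alpha2_nil : S.alpha2 [] = 1 := min_self 1

lemma alpha2_pos (w : List E) : 0 < S.alpha2 w :=
  (S.side_pos w _).trans_eq (S.alpha2_eq_side w).symm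

lemma alpha2_le_pow {r : ℝ} (hr : ∀ e i, S.ratio e i ≤ r) (w : List E) :
    S.alpha2 w ≤ r ^ w.length :=
  (S.alpha2_eq_side w).trans_le (S.side_le_pow hr w _)

lemma exists_length_lt_of_le_alpha2 [Finite E] {δ : ℝ} (hδ : 0 < δ) :
    ∃ N : ℕ, ∀ w, δ ≤ S.alpha2 w → w.length < N := by
  obtain ⟨r, ⟨hr0, hr1⟩, hr⟩ := S.exists_ratio_le
  obtain ⟨N, hN⟩ := exists_pow_lt_of_lt_one hδ hr1
  refine ⟨N, fun w hw => lt_of_not_ge fun hNw => hN.not_ge ?_⟩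
  exact (hw.trans (S.alpha2_le_pow hr w)).trans (pow_le_pow_of_le_one hr0.le hr1.le hNw)

lemma mem_EstarDelta_iff {δ : ℝ} {w : List E} :
    w ∈ S.EstarDelta δ ↔ S.Admissible w ∧ w ∈ exitWords fun u => δ ≤ S.alpha2 u := by
  simp only [EstarDelta, exitWords, mem_ofPred_eq, not_le]
  exact and_left_comm

end Sides

section Vertices

variable {V E : Type*} {S : BoxLikeGIFS V E} {w u : List E}

lemma Admissible.left_of_append (h : S.Admissible (w ++ u)) : S.Admissible w :=
  List.IsChain.left_of_append h

lemma Admissible.right_of_append (h : S.Admissible (w ++ u)) : S.Admissible u :=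
  List.IsChain.right_of_append h

variable [Nonempty V]

lemma wordInit_append (hw : w ≠ []) (u : List E) : S.wordInit (w ++ u) = S.wordInit w := by
  simp [wordInit, List.head?_append, List.head?_eq_some_head hw]

lemma wordTerm_append (w : List E) (hu : u ≠ []) : S.wordTerm (w ++ u) = S.wordTerm u := by
  simp [wordTerm, List.getLast?_append, List.getLast?_eq_some_getLast hu]

lemma admissible_append_iff (hw : w ≠ []) (hu : u ≠ []) :
    S.Admissible (w ++ u) ↔ S.Admissible w ∧ S.Admissible u ∧ S.wordTerm w = S.wordInit u := by
  refine List.isChain_append.trans (and_congr_right' (and_congr_right' ?_))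
  simp [wordTerm, wordInit, List.getLast?_eq_some_getLast hw, List.head?_eq_some_head hu]

/-- The nonempty word `w` is a path in the graph from the vertex `v` to the vertex `v'`. -/
def IsPath (S : BoxLikeGIFS V E) (v v' : V) (w : List E) : Prop :=
  w ≠ [] ∧ S.Admissible w ∧ S.wordInit w = v ∧ S.wordTerm w = v'

lemma IsPath.append {v v' v'' : V} (hw : S.IsPath v v' w) (hu : S.IsPath v' v'' u) :
    S.IsPath v v'' (w ++ u) := by
  obtain ⟨hw0, hw, hwi, hwt⟩ := hw
  obtain ⟨hu0, hu, hui, hut⟩ := hu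
  exact ⟨List.append_ne_nil_of_left_ne_nil hw0 u,
    (admissible_append_iff hw0 hu0).2 ⟨hw, hu, hwt.trans hui.symm⟩,
    (wordInit_append hw0 u).trans hwi, (wordTerm_append w hu0).trans hut⟩

lemma isPath_singleton (e : E) : S.IsPath (S.init e) (S.term e) [e] :=
  ⟨List.cons_ne_nil e [], List.isChain_singleton e, rfl, rfl⟩

lemma StronglyConnected.exists_isPath (hSC : S.StronglyConnected) (v v' : V) :
    ∃ w, S.IsPath v v' w := by
  induction hSC v v' with
  | single h =>
    obtain ⟨e, rfl, rfl⟩ := h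
    exact ⟨[e], isPath_singleton e⟩
  | tail _ h ih =>
    obtain ⟨e, rfl, rfl⟩ := h
    obtain ⟨w, hw⟩ := ih
    exact ⟨w ++ [e], hw.append (isPath_singleton e)⟩

lemma isPath_joinBlocks {v : V} {Λ : Finset (List E)} (hΛ : ∀ l ∈ Λ, S.IsPath v v l)
    {W : List Λ} (hW : W ≠ []) : S.IsPath v v (joinBlocks W) := by
  induction W with
  | nil => exact absurd rfl hW
  | cons l W ih =>
    rcases eq_or_ne W [] with rfl | hW'
    · simpa using hΛ l l.2
    · exact (hΛ l l.2).append (ih hW')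

lemma IsSplit.dirTau_wordInit {τx τy : V → ℝ} (hτ : S.IsSplit τx τy) (hw : w ≠ [])
    (h : S.Admissible w) (i : Bool) :
    dirTau τx τy (S.wordInit w) i = dirTau τx τy (S.wordTerm w) (i == S.wordDiag w) := by
  induction w generalizing i with
  | nil => exact absurd rfl hw
  | cons e w ih =>
    rcases eq_or_ne w [] with rfl | hne
    · simpa [wordInit, wordTerm, wordDiag] using hτ e i
    · obtain ⟨-, hadm, hterm⟩ :=
        (admissible_append_iff (w := [e]) (List.cons_ne_nil e []) hne).1 h
      calc dirTau τx τy (S.init e) i = dirTau τx τy (S.wordInit w) (i == S.diag e) := by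
            rw [hτ e i, ← hterm]
            rfl
        _ = dirTau τx τy (S.wordTerm (e :: w)) (i == S.wordDiag (e :: w)) := by
            rw [ih hne hadm, beq_assoc, ← wordTerm_append [e] hne]
            rfl

end Vertices

/-! ### The modified singular value function -/

section Msvf

variable {V E : Type*} [Nonempty V] (S : BoxLikeGIFS V E) (p : E → ℝ) (τx τy : V → ℝ) (s q : ℝ)

/-- The analogue of `φ^{s,q}(w)` in which the coordinate direction `i` plays the role of the
direction of the longest side. In contrast to `φ^{s,q}`, it is multiplicative along words. -/
noncomputable def dirWeight (i : Bool) (w : List E) : ℝ :=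
  wordProb p w ^ q * S.side w i ^ dirTau τx τy (S.wordTerm w) (i == S.wordDiag w) *
    S.side w (!i) ^ (s - dirTau τx τy (S.wordTerm w) (i == S.wordDiag w))

lemma msvf_eq_dirWeight (w : List E) :
    S.msvf p τx τy s q w = S.dirWeight p τx τy s q (S.longDir w) w := by
  have hτ : S.wordTau τx τy w =
      dirTau τx τy (S.wordTerm w) (S.longDir w == S.wordDiag w) := by
    have hdir : ((S.wdims w).2 ≤ (S.wdims w).1) ↔ S.longDir w = false := by
      simp [longDir, side, coord]
    simp only [wordTau, hdir]
    cases S.longDir w <;> cases S.wordDiag w <;> simp [dirTau, coord]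
  rw [msvf, dirWeight, hτ, alpha1_eq_side, alpha2_eq_side]

lemma msvf_nil : S.msvf p τx τy s q [] = 1 := by
  simp [msvf, alpha1, alpha2, wdims, wordProb]

lemma msvf_eq_mul_alpha2_rpow (s' : ℝ) (w : List E) :
    S.msvf p τx τy s q w = S.alpha2 w ^ (s - s') * S.msvf p τx τy s' q w := by
  rw [msvf, msvf, mul_left_comm, ← Real.rpow_add (S.alpha2_pos w)]
  ring_nf

variable {p s}

lemma wordProb_pos (hp : ∀ e, 0 < p e) (w : List E) : 0 < wordProb p w :=
  List.prod_pos fun x hx => by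
    obtain ⟨e, -, rfl⟩ := List.mem_map.1 hx
    exact hp e

lemma dirWeight_pos (hp : ∀ e, 0 < p e) (i : Bool) (w : List E) :
    0 < S.dirWeight p τx τy s q i w := by
  have hprob := wordProb_pos hp w
  have hi := S.side_pos w i
  have hi' := S.side_pos w !i
  unfold dirWeight
  positivity

lemma msvf_pos (hp : ∀ e, 0 < p e) (w : List E) : 0 < S.msvf p τx τy s q w :=
  (S.dirWeight_pos τx τy q hp _ w).trans_eq (S.msvf_eq_dirWeight p τx τy s q w).symm

lemma msvf_le_pow_mul (hp : ∀ e, 0 < p e) {s' r : ℝ} (hs : s' ≤ s) (hr0 : 0 < r)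
    (hr : ∀ e i, S.ratio e i ≤ r) (w : List E) :
    S.msvf p τx τy s q w ≤ (r ^ (s - s')) ^ w.length * S.msvf p τx τy s' q w := by
  rw [S.msvf_eq_mul_alpha2_rpow p τx τy s q s', Real.rpow_pow_comm hr0.le]
  exact mul_le_mul_of_nonneg_right
    (Real.rpow_le_rpow (S.alpha2_pos w).le (S.alpha2_le_pow hr w) (sub_nonneg.2 hs))
    (S.msvf_pos τx τy q hp w).le

variable {S τx τy}

lemma dirWeight_append (hp : ∀ e, 0 < p e) (hτ : S.IsSplit τx τy) (i : Bool) {w u : List E}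
    (h : S.Admissible (w ++ u)) :
    S.dirWeight p τx τy s q i (w ++ u) =
      S.dirWeight p τx τy s q i w * S.dirWeight p τx τy s q (i == S.wordDiag w) u := by
  rcases eq_or_ne w [] with rfl | hw
  · simp [dirWeight, side_nil, wordProb, wordDiag]
  rcases eq_or_ne u [] with rfl | hu
  · simp [dirWeight, side_nil, wordProb]
  obtain ⟨-, hadm, hterm⟩ := (admissible_append_iff hw hu).1 h
  have hτw : dirTau τx τy (S.wordTerm w) (i == S.wordDiag w) =
      dirTau τx τy (S.wordTerm u) ((i == S.wordDiag w) == S.wordDiag u) := by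
    rw [hterm, hτ.dirTau_wordInit hu hadm]
  have hprob : wordProb p (w ++ u) = wordProb p w * wordProb p u := by simp [wordProb]
  simp only [dirWeight]
  rw [wordTerm_append w hu, wordDiag_append, ← beq_assoc, hτw, hprob, side_append, side_append,
    not_beq, Real.mul_rpow (wordProb_pos hp w).le (wordProb_pos hp u).le,
    Real.mul_rpow (S.side_pos _ _).le (S.side_pos _ _).le,
    Real.mul_rpow (S.side_pos _ _).le (S.side_pos _ _).le]
  ring

lemma dirWeight_not_eq {t : ℝ} (ht : ∀ v, τx v + τy v = t) (i : Bool) (w : List E) :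
    S.dirWeight p τx τy s q (!i) w =
      S.dirWeight p τx τy s q i w * (S.side w (!i) / S.side w i) ^ (t - s) := by
  have hi := S.side_pos w i
  have hi' := S.side_pos w !i
  have hsum : dirTau τx τy (S.wordTerm w) ((!i) == S.wordDiag w) =
      t - dirTau τx τy (S.wordTerm w) (i == S.wordDiag w) := by
    rw [eq_sub_iff_add_eq', dirTau_beq_add_dirTau_not_beq, ht]
  simp only [dirWeight]
  rw [Bool.not_not, hsum, Real.div_rpow hi'.le hi.le]
  generalize dirTau τx τy (S.wordTerm w) (i == S.wordDiag w) = x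
  rw [show t - x = (s - x) + (t - s) by ring, show s - (s - x + (t - s)) = x - (t - s) by ring,
    Real.rpow_add hi', Real.rpow_sub hi]
  ring

lemma dirWeight_le_msvf (hp : ∀ e, 0 < p e) {t : ℝ} (ht : ∀ v, τx v + τy v = t) (hs : s ≤ t)
    (i : Bool) (w : List E) : S.dirWeight p τx τy s q i w ≤ S.msvf p τx τy s q w := by
  rw [msvf_eq_dirWeight]
  rcases Bool.eq_or_eq_not i (S.longDir w) with rfl | rfl
  · exact le_rfl
  · rw [dirWeight_not_eq q ht]
    exact mul_le_of_le_one_right (S.dirWeight_pos τx τy q hp _ w).le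
      (Real.rpow_le_one (div_pos (S.side_pos _ _) (S.side_pos _ _)).le
        ((div_le_one (S.side_pos _ _)).2 (S.side_not_longDir_le w)) (sub_nonneg.2 hs))

lemma msvf_le_dirWeight (hp : ∀ e, 0 < p e) {t : ℝ} (ht : ∀ v, τx v + τy v = t) (hs : t ≤ s)
    (i : Bool) (w : List E) : S.msvf p τx τy s q w ≤ S.dirWeight p τx τy s q i w := by
  rw [msvf_eq_dirWeight]
  rcases Bool.eq_or_eq_not i (S.longDir w) with rfl | rfl
  · exact le_rfl
  · rw [dirWeight_not_eq q ht]
    exact le_mul_of_one_le_right (S.dirWeight_pos τx τy q hp _ w).le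
      (Real.one_le_rpow_of_pos_of_le_one_of_nonpos (div_pos (S.side_pos _ _) (S.side_pos _ _))
        ((div_le_one (S.side_pos _ _)).2 (S.side_not_longDir_le w)) (sub_nonpos.2 hs))

lemma msvf_append_le (hp : ∀ e, 0 < p e) (hτ : S.IsSplit τx τy) {t : ℝ}
    (ht : ∀ v, τx v + τy v = t) (hs : s ≤ t) {w u : List E} (h : S.Admissible (w ++ u)) :
    S.msvf p τx τy s q (w ++ u) ≤ S.msvf p τx τy s q w * S.msvf p τx τy s q u := by
  rw [msvf_eq_dirWeight, dirWeight_append q hp hτ _ h]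
  exact mul_le_mul (dirWeight_le_msvf q hp ht hs _ w) (dirWeight_le_msvf q hp ht hs _ u)
    (S.dirWeight_pos τx τy q hp _ u).le (S.msvf_pos τx τy q hp w).le

lemma msvf_mul_le_append (hp : ∀ e, 0 < p e) (hτ : S.IsSplit τx τy) {t : ℝ}
    (ht : ∀ v, τx v + τy v = t) (hs : t ≤ s) {w u : List E} (h : S.Admissible (w ++ u)) :
    S.msvf p τx τy s q w * S.msvf p τx τy s q u ≤ S.msvf p τx τy s q (w ++ u) := by
  rw [S.msvf_eq_dirWeight p τx τy s q (w ++ u), dirWeight_append q hp hτ _ h]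
  exact mul_le_mul (msvf_le_dirWeight q hp ht hs _ w) (msvf_le_dirWeight q hp ht hs _ u)
    (S.msvf_pos τx τy q hp u).le (S.dirWeight_pos τx τy q hp _ w).le

lemma exists_msvf_append_le_mul [Finite E] (hp : ∀ e, 0 < p e) (hτ : S.IsSplit τx τy) {t : ℝ}
    (ht : ∀ v, τx v + τy v = t) (hs : t ≤ s) (m : ℕ) :
    ∃ C, 0 < C ∧ ∀ w u : List E, u.length ≤ m → S.Admissible (w ++ u) →
      S.msvf p τx τy s q (w ++ u) ≤ C * S.msvf p τx τy s q w := by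
  obtain ⟨C, hC⟩ := (((List.finite_length_le E m).prod (Set.finite_univ (α := Bool))).image
    fun x => S.dirWeight p τx τy s q x.2 x.1).bddAbove
  have hC' (i : Bool) {u : List E} (hu : u.length ≤ m) : S.dirWeight p τx τy s q i u ≤ C :=
    hC ⟨(u, i), ⟨hu, mem_univ i⟩, rfl⟩
  refine ⟨C, (S.dirWeight_pos τx τy q hp false []).trans_le (hC' _ (Nat.zero_le m)),
    fun w u hu h => (msvf_le_dirWeight q hp ht hs (S.longDir w) _).trans ?_⟩
  rw [dirWeight_append q hp hτ _ h, ← msvf_eq_dirWeight, mul_comm]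
  exact mul_le_mul_of_nonneg_right (hC' _ hu) (S.msvf_pos τx τy q hp w).le

end Msvf

end BoxLikeGIFS

namespace BoxLikeGIFS

/-! ### Sums of the modified singular value function -/

section Sums

variable {V E : Type*} [Nonempty V] (S : BoxLikeGIFS V E) {p : E → ℝ} (τx τy : V → ℝ) {s : ℝ}
  (q : ℝ)

/-- The function `φ^{s,q}` on the admissible words, extended by zero to all words, so that sums
over admissible words become sums over all words. -/
noncomputable def extMsvf (p : E → ℝ) (s : ℝ) : List E → ℝ :=
  {w | S.Admissible w}.indicator (S.msvf p τx τy s q)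

variable {S} in
lemma Admissible.extMsvf_eq {w : List E} (h : S.Admissible w) :
    S.extMsvf τx τy q p s w = S.msvf p τx τy s q w :=
  indicator_of_mem h _

lemma extMsvf_nonneg (hp : ∀ e, 0 < p e) (w : List E) : 0 ≤ S.extMsvf τx τy q p s w :=
  indicator_nonneg (fun u _ => (S.msvf_pos τx τy q hp u).le) w

lemma mnorm_Amat [Fintype V] [Fintype E] (hp : ∀ e, 0 < p e) (n : ℕ) :
    mnorm (S.Amat p τx τy s q n) = ∑ w ∈ wordsOfLength E n, S.extMsvf τx τy q p s w := by
  have hnonneg (v v' : V) : 0 ≤ S.Amat p τx τy s q n v v' := Finset.sum_nonneg fun f _ => by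
    split_ifs
    exacts [(S.msvf_pos τx τy q hp _).le, le_rfl]
  rw [sum_wordsOfLength, mnorm]
  simp_rw [abs_of_nonneg (hnonneg _ _), Amat]
  rw [Finset.sum_congr rfl fun v _ => Finset.sum_comm, Finset.sum_comm]
  refine Finset.sum_congr rfl fun f _ => ?_
  by_cases h : S.Admissible (List.ofFn f)
  · rw [h.extMsvf_eq]
    simp [h, ite_and]
  · simp [extMsvf, h]

lemma sum_extMsvf_le_pow_mul [Finite E] (hp : ∀ e, 0 < p e) {s' r : ℝ} (hs : s' ≤ s)
    (hr0 : 0 < r) (hr : ∀ e i, S.ratio e i ≤ r) (n : ℕ) :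
    ∑ w ∈ wordsOfLength E n, S.extMsvf τx τy q p s w ≤
      (r ^ (s - s')) ^ n * ∑ w ∈ wordsOfLength E n, S.extMsvf τx τy q p s' w := by
  rw [Finset.mul_sum]
  refine Finset.sum_le_sum fun w hw => ?_
  obtain rfl := mem_wordsOfLength.1 hw
  by_cases h : S.Admissible w
  · rw [h.extMsvf_eq, h.extMsvf_eq]
    exact S.msvf_le_pow_mul τx τy q hp hs hr0 hr w
  · simp [extMsvf, h]

section Pressure

variable [Fintype V] [Fintype E] {γ : ℝ}

lemma summable_sum_extMsvf (hp : ∀ e, 0 < p e) (hs : γ < s)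
    (hγ : Tendsto (fun k : ℕ => mnorm (S.Amat p τx τy γ q k) ^ (k : ℝ)⁻¹) atTop (nhds 1)) :
    Summable fun n => ∑ w ∈ wordsOfLength E n, S.extMsvf τx τy q p s w := by
  obtain ⟨r, ⟨hr0, hr1⟩, hr⟩ := S.exists_ratio_le
  have hnonneg (s : ℝ) (n : ℕ) : 0 ≤ ∑ w ∈ wordsOfLength E n, S.extMsvf τx τy q p s w :=
    Finset.sum_nonneg fun w _ => S.extMsvf_nonneg τx τy q hp w
  simp_rw [S.mnorm_Amat τx τy q hp] at hγ
  refine Summable.of_nonneg_of_le (hnonneg s) (S.sum_extMsvf_le_pow_mul τx τy q hp hs.le hr0 hr)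
    (summable_pow_mul_of_tendsto_rpow_inv (hnonneg γ) hγ (Real.rpow_nonneg hr0.le _) ?_)
  rw [mul_one]
  exact Real.rpow_lt_one hr0.le hr1 (sub_pos.2 hs)

lemma tendsto_sum_extMsvf_atTop (hp : ∀ e, 0 < p e) (hs : s < γ)
    (hγ : Tendsto (fun k : ℕ => mnorm (S.Amat p τx τy γ q k) ^ (k : ℝ)⁻¹) atTop (nhds 1)) :
    Tendsto (fun n => ∑ w ∈ wordsOfLength E n, S.extMsvf τx τy q p s w) atTop atTop := by
  obtain ⟨r, ⟨hr0, hr1⟩, hr⟩ := S.exists_ratio_le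
  have hnonneg (n : ℕ) : 0 ≤ ∑ w ∈ wordsOfLength E n, S.extMsvf τx τy q p γ w :=
    Finset.sum_nonneg fun w _ => S.extMsvf_nonneg τx τy q hp w
  simp_rw [S.mnorm_Amat τx τy q hp] at hγ
  refine tendsto_atTop_mono (fun n => ?_) (tendsto_pow_mul_atTop_of_tendsto_rpow_inv
    (ρ := r ^ (s - γ)) hnonneg hγ ?_)
  · have hpos : 0 < (r ^ (γ - s)) ^ n := pow_pos (Real.rpow_pos_of_pos hr0 _) n
    rw [← neg_sub, Real.rpow_neg hr0.le, inv_pow, inv_mul_le_iff₀ hpos]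
    exact S.sum_extMsvf_le_pow_mul τx τy q hp hs.le hr0 hr n
  · rw [mul_one]
    exact Real.one_lt_rpow_of_pos_of_lt_one_of_neg hr0 hr1 (sub_neg.2 hs)

theorem exists_forall_sum_msvf_le (hp : ∀ e, 0 < p e) (hs : γ < s)
    (hγ : Tendsto (fun k : ℕ => mnorm (S.Amat p τx τy γ q k) ^ (k : ℝ)⁻¹) atTop (nhds 1)) :
    ∃ C, ∀ F : Finset (List E), (∀ w ∈ F, S.Admissible w) →
      ∑ w ∈ F, S.msvf p τx τy s q w ≤ C := by
  refine ⟨_, fun F hF => (Finset.sum_congr rfl fun w hw => ?_).trans_le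
    (sum_le_tsum_sum_wordsOfLength (S.extMsvf_nonneg τx τy q hp)
      (S.summable_sum_extMsvf τx τy q hp hs hγ) F)⟩
  exact ((hF w hw).extMsvf_eq τx τy q).symm

end Pressure

variable {τx τy}

lemma extMsvf_append_le (hp : ∀ e, 0 < p e) (hτ : S.IsSplit τx τy) {t : ℝ}
    (ht : ∀ v, τx v + τy v = t) (hs : s ≤ t) (w u : List E) :
    S.extMsvf τx τy q p s (w ++ u) ≤ S.extMsvf τx τy q p s w * S.extMsvf τx τy q p s u := by
  by_cases h : S.Admissible (w ++ u)
  · rw [h.extMsvf_eq, h.left_of_append.extMsvf_eq, h.right_of_append.extMsvf_eq]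
    exact msvf_append_le q hp hτ ht hs h
  · exact (indicator_of_notMem h _).trans_le
      (mul_nonneg (S.extMsvf_nonneg τx τy q hp w) (S.extMsvf_nonneg τx τy q hp u))

lemma exists_extMsvf_append_le_mul [Finite E] (hp : ∀ e, 0 < p e) (hτ : S.IsSplit τx τy) {t : ℝ}
    (ht : ∀ v, τx v + τy v = t) (hs : t ≤ s) (m : ℕ) :
    ∃ C, ∀ w u : List E, u.length ≤ m →
      S.extMsvf τx τy q p s (w ++ u) ≤ C * S.extMsvf τx τy q p s w := by
  obtain ⟨C, hC0, hC⟩ := exists_msvf_append_le_mul q hp hτ ht hs m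
  refine ⟨C, fun w u hu => ?_⟩
  by_cases h : S.Admissible (w ++ u)
  · rw [h.extMsvf_eq, h.left_of_append.extMsvf_eq]
    exact hC w u hu h
  · exact (indicator_of_notMem h _).trans_le (mul_nonneg hC0.le (S.extMsvf_nonneg τx τy q hp w))

variable {S}

lemma prod_extMsvf_le_extMsvf_joinBlocks (hp : ∀ e, 0 < p e) (hτ : S.IsSplit τx τy) {t : ℝ}
    (ht : ∀ v, τx v + τy v = t) (hs : t ≤ s) {v : V} {Λ : Finset (List E)}
    (hΛ : ∀ l ∈ Λ, S.IsPath v v l) (W : List Λ) :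
    (W.map fun l => S.extMsvf τx τy q p s l.1).prod ≤ S.extMsvf τx τy q p s (joinBlocks W) := by
  induction W with
  | nil =>
    have hnil : S.Admissible [] := List.isChain_nil
    rw [joinBlocks_nil, hnil.extMsvf_eq, msvf_nil]
    exact le_rfl
  | cons l W ih =>
    have hadm : S.Admissible (l.1 ++ joinBlocks W) :=
      (isPath_joinBlocks hΛ (List.cons_ne_nil l W)).2.1
    rw [List.map_cons, List.prod_cons, joinBlocks_cons]
    refine (mul_le_mul_of_nonneg_left ih (S.extMsvf_nonneg τx τy q hp l)).trans ?_
    rw [hadm.extMsvf_eq, hadm.left_of_append.extMsvf_eq, hadm.right_of_append.extMsvf_eq]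
    exact msvf_mul_le_append q hp hτ ht hs hadm

lemma exists_lt_sum_extMsvf_isPath [Finite V] [Finite E]
    (hlim : Tendsto (fun n => ∑ w ∈ wordsOfLength E n, S.extMsvf τx τy q p s w) atTop atTop)
    (K : ℝ) : ∃ n v v', 0 < n ∧
      K < ∑ w ∈ wordsOfLength E n with S.IsPath v v' w, S.extMsvf τx τy q p s w := by
  cases nonempty_fintype V
  obtain ⟨n, hn, hn0⟩ := ((hlim.eventually_gt_atTop ((Finset.univ : Finset (V × V)).card • K)).and
    (eventually_gt_atTop 0)).exists
  obtain ⟨⟨v, v'⟩, -, hK⟩ := Finset.exists_lt_sum_fiber_of_maps_to_of_nsmul_lt_sum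
    (f := fun w => (S.wordInit w, S.wordTerm w)) (fun w _ => Finset.mem_univ _) hn
  refine ⟨n, v, v', hn0, hK.trans_eq (Finset.sum_subset ?_ fun w hw hw' => ?_).symm⟩
  · exact Finset.monotone_filter_right _ fun w _ hw => Prod.ext hw.2.2.1 hw.2.2.2
  · obtain ⟨hwn, hwv⟩ := Finset.mem_filter.1 hw
    refine indicator_of_notMem (fun hadm => hw' (Finset.mem_filter.2 ⟨hwn, ?_⟩)) _
    exact ⟨List.ne_nil_of_length_pos (hn0.trans_eq (mem_wordsOfLength.1 hwn).symm), hadm,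
      congrArg Prod.fst hwv, congrArg Prod.snd hwv⟩

/-- The words of a large length from `v` to `v'` have a large sum for some `v` and `v'`. They are
closed up by a fixed path from `v'` back to `v`. -/
lemma exists_loops_one_lt_sum [Finite V] [Finite E] (hSC : S.StronglyConnected)
    (hp : ∀ e, 0 < p e) (hτ : S.IsSplit τx τy) {t : ℝ} (ht : ∀ v, τx v + τy v = t) (hs : t ≤ s)
    (hlim : Tendsto (fun n => ∑ w ∈ wordsOfLength E n, S.extMsvf τx τy q p s w) atTop atTop) :
    ∃ (m : ℕ) (v : V) (Λ : Finset (List E)), 0 < m ∧ (∀ l ∈ Λ, l.length = m) ∧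
      (∀ l ∈ Λ, S.IsPath v v l) ∧ 1 < ∑ l ∈ Λ, S.extMsvf τx τy q p s l := by
  choose c hc using hSC.exists_isPath
  have hpos (v v' : V) : 0 < S.msvf p τx τy s q (c v v') := S.msvf_pos τx τy q hp _
  obtain ⟨K, hK⟩ :=
    (Set.finite_range fun j : V × V => (S.msvf p τx τy s q (c j.1 j.2))⁻¹).bddAbove
  obtain ⟨n, v, v', hn, hKn⟩ := exists_lt_sum_extMsvf_isPath q hlim K
  set W := (wordsOfLength E n).filter fun w => S.IsPath v v' w
  have hW {w : List E} (hw : w ∈ W) : S.IsPath v v (w ++ c v' v) :=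
    (Finset.mem_filter.1 hw).2.append (hc v' v)
  refine ⟨n + (c v' v).length, v, W.image (· ++ c v' v), Nat.add_pos_left hn _,
    Finset.forall_mem_image.2 fun w hw => ?_, Finset.forall_mem_image.2 fun w hw => hW hw, ?_⟩
  · rw [List.length_append, mem_wordsOfLength.1 (Finset.mem_filter.1 hw).1]
  · calc 1 = (S.msvf p τx τy s q (c v' v))⁻¹ * S.msvf p τx τy s q (c v' v) :=
          (inv_mul_cancel₀ (hpos v' v).ne').symm
      _ < (∑ w ∈ W, S.extMsvf τx τy q p s w) * S.msvf p τx τy s q (c v' v) :=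
          mul_lt_mul_of_pos_right ((hK ⟨(v', v), rfl⟩).trans_lt hKn) (hpos v' v)
      _ = ∑ w ∈ W, S.extMsvf τx τy q p s w * S.msvf p τx τy s q (c v' v) := Finset.sum_mul _ _ _
      _ ≤ ∑ w ∈ W, S.extMsvf τx τy q p s (w ++ c v' v) := Finset.sum_le_sum fun w hw => by
          have hadm := (hW hw).2.1
          rw [hadm.extMsvf_eq, hadm.left_of_append.extMsvf_eq]
          exact msvf_mul_le_append q hp hτ ht hs hadm
      _ = ∑ l ∈ W.image (· ++ c v' v), S.extMsvf τx τy q p s l :=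
          (Finset.sum_image fun w _ w' _ h => List.append_cancel_right h).symm

lemma exists_mul_sum_extMsvf_exitWords [Finite V] [Finite E] (hSC : S.StronglyConnected)
    (hp : ∀ e, 0 < p e) (hτ : S.IsSplit τx τy)
    (hlim : Tendsto (fun n => ∑ w ∈ wordsOfLength E n, S.extMsvf τx τy q p s w) atTop atTop) :
    ∃ C, ∀ δ, 0 < δ → δ ≤ 1 → ∀ X : Finset (List E),
      (X : Set (List E)) = exitWords (fun w => δ ≤ S.alpha2 w) →
      1 ≤ C * ∑ x ∈ X, S.extMsvf τx τy q p s x := by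
  obtain ⟨t, ht⟩ := hτ.exists_add_eq hSC
  rcases le_total s t with hst | hst
  · refine ⟨1, fun δ hδ hδ1 X hX => ?_⟩
    obtain ⟨N, hN⟩ := S.exists_length_lt_of_le_alpha2 hδ
    rw [one_mul]
    exact one_le_sum_exitWords_of_submultiplicative (S.extMsvf_nonneg τx τy q hp)
      (S.extMsvf_append_le q hp hτ ht hst) hlim (hδ1.trans_eq S.alpha2_nil.symm) hN hX
  · obtain ⟨m, v, Λ, hm, hΛm, hΛ, hΛ1⟩ := exists_loops_one_lt_sum q hSC hp hτ ht hst hlim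
    obtain ⟨C, hC⟩ := S.exists_extMsvf_append_le_mul q hp hτ ht hst m
    refine ⟨C * (List.finite_length_le E m).toFinset.card, fun δ hδ hδ1 X hX => ?_⟩
    obtain ⟨N, hN⟩ := S.exists_length_lt_of_le_alpha2 hδ
    exact one_le_mul_sum_exitWords_of_blocks (S.extMsvf_nonneg τx τy q hp) hm hΛm hΛ1
      (prod_extMsvf_le_extMsvf_joinBlocks q hp hτ ht hst hΛ) hC
      (hδ1.trans_eq S.alpha2_nil.symm) hN hX

theorem exists_le_sum_msvf_EstarDelta [Fintype V] [Fintype E] (hSC : S.StronglyConnected)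
    (hp : ∀ e, 0 < p e) (hτ : S.IsSplit τx τy) {γ : ℝ} (hs : s < γ)
    (hγ : Tendsto (fun k : ℕ => mnorm (S.Amat p τx τy γ q k) ^ (k : ℝ)⁻¹) atTop (nhds 1)) :
    ∃ c, 0 < c ∧ ∀ δ, 0 < δ → δ ≤ 1 → ∃ F : Finset (List E),
      (∀ w ∈ F, w ∈ S.EstarDelta δ) ∧ c ≤ ∑ w ∈ F, S.msvf p τx τy s q w := by
  obtain ⟨C, hC⟩ := exists_mul_sum_extMsvf_exitWords q hSC hp hτ
    (S.tendsto_sum_extMsvf_atTop τx τy q hp hs hγ)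
  have hC0 : 0 < max C 1 := one_pos.trans_le (le_max_right C 1)
  refine ⟨(max C 1)⁻¹, inv_pos.2 hC0, fun δ hδ hδ1 => ?_⟩
  obtain ⟨N, hN⟩ := S.exists_length_lt_of_le_alpha2 hδ
  have hfin := finite_exitWords hN
  have hnonneg : 0 ≤ ∑ x ∈ hfin.toFinset, S.extMsvf τx τy q p s x :=
    Finset.sum_nonneg fun x _ => S.extMsvf_nonneg τx τy q hp x
  refine ⟨hfin.toFinset.filter S.Admissible, fun w hw => ?_,
    (inv_le_iff_one_le_mul₀' hC0).2 ?_⟩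
  · obtain ⟨hw, hadm⟩ := Finset.mem_filter.1 hw
    exact S.mem_EstarDelta_iff.2 ⟨hadm, hfin.mem_toFinset.1 hw⟩
  · calc 1 ≤ C * ∑ x ∈ hfin.toFinset, S.extMsvf τx τy q p s x :=
          hC δ hδ hδ1 _ hfin.coe_toFinset
      _ ≤ max C 1 * ∑ x ∈ hfin.toFinset, S.extMsvf τx τy q p s x :=
          mul_le_mul_of_nonneg_right (le_max_left C 1) hnonneg
      _ = max C 1 * ∑ w ∈ hfin.toFinset with S.Admissible w, S.msvf p τx τy s q w := by
          rw [Finset.sum_filter]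
          rfl

end Sums

end BoxLikeGIFS

end LqGIFS

theorem statement17_general {V E : Type*} [Fintype V] [Fintype E] [Nonempty V]
    (S : BoxLikeGIFS V E) (hSC : S.StronglyConnected) (p : E → ℝ) (hp : ∀ e, 0 < p e) (q : ℝ)
    (τx τy : V → ℝ) (hτ : S.IsSplit τx τy) (γ : ℝ)
    (hγ : Tendsto (fun k : ℕ => mnorm (S.Amat p τx τy γ q k) ^ (k : ℝ)⁻¹) atTop (nhds 1)) :
    (∀ s, γ < s → ∃ C, ∀ δ, 0 < δ → ∀ F : Finset (List E), (∀ w ∈ F, w ∈ S.EstarDelta δ) →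
      ∑ w ∈ F, S.msvf p τx τy s q w ≤ C) ∧
    (∀ s, s < γ → ∃ c, 0 < c ∧ ∃ δ₀, 0 < δ₀ ∧ ∀ δ, 0 < δ → δ < δ₀ → ∃ F : Finset (List E),
      (∀ w ∈ F, w ∈ S.EstarDelta δ) ∧ c ≤ ∑ w ∈ F, S.msvf p τx τy s q w) := by
  refine ⟨fun s hs => ?_, fun s hs => ?_⟩
  · obtain ⟨C, hC⟩ := S.exists_forall_sum_msvf_le τx τy q hp hs hγ
    exact ⟨C, fun δ _ F hF => hC F fun w hw => (hF w hw).2.1⟩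
  · obtain ⟨c, hc, h⟩ := BoxLikeGIFS.exists_le_sum_msvf_EstarDelta q hSC hp hτ hs hγ
    exact ⟨c, hc, 1, one_pos, fun δ hδ hδ1 => h δ hδ hδ1.le⟩

/-- sums of `φ^{s,q}` over `E^*_δ`.  (a) For `s > γ(q)` the sums
`∑_{w ∈ E^*_δ} φ^{s,q}(w)` are bounded above uniformly in `δ > 0`; (b) for `s < γ(q)`
they are bounded below by a positive constant for all sufficiently small `δ > 0`.
(Sums over the possibly infinite set `E^*_δ` are expressed via finite subsets; as
`φ^{s,q} ≥ 0`, this is equivalent.) -/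
theorem statement17
    {V E : Type} [Fintype V] [Fintype E] [Nonempty V]
    (S : BoxLikeGIFS V E) (hSC : S.StronglyConnected)
    (p : E → ℝ) (hp : S.IsWeights p)
    (μ : V → Measure (ℝ × ℝ)) (hμ : S.IsGDMeasure p μ)
    (q : ℝ) (hq : 0 ≤ q)
    (τx τy : V → ℝ)
    (hτx : ∀ v : V, HasLq1 ((μ v).map Prod.fst) q (τx v))
    (hτy : ∀ v : V, HasLq1 ((μ v).map Prod.snd) q (τy v))
    (γ : ℝ)
    (hγ : Tendsto (fun k : ℕ => (mnorm (S.Amat p τx τy γ q k)) ^ ((k : ℝ)⁻¹))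
      atTop (nhds 1)) :
    (∀ s : ℝ, γ < s → ∃ C : ℝ, ∀ δ : ℝ, 0 < δ →
      ∀ F : Finset (List E), (∀ w ∈ F, w ∈ S.EstarDelta δ) →
        (∑ w ∈ F, S.msvf p τx τy s q w) ≤ C) ∧
    (∀ s : ℝ, s < γ → ∃ c : ℝ, 0 < c ∧ ∃ δ₀ : ℝ, 0 < δ₀ ∧
      ∀ δ : ℝ, 0 < δ → δ < δ₀ →
        ∃ F : Finset (List E), (∀ w ∈ F, w ∈ S.EstarDelta δ) ∧
          c ≤ ∑ w ∈ F, S.msvf p τx τy s q w) := by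
  exact statement17_general S hSC p hp.1 q τx τy (hμ.isSplit hSC hp hq hτx hτy) γ hγ
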